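/- Let n be a positive integer and let F be a finite field of cardinality q with 3 dividing q−1. Let M ≤ GL_n(F) be the group of monomial matrices, i.e. invertible matrices having exactly one nonzero entry in each row and each column (so M ≅ GL_1(F) ≀ S_n). Then there exists a bijection between Irr_{3'}(GL_n(F)) and Irr_{3'}(M). -/

import Mathlib

open scoped Classical
open Matrix

noncomputable section

/-- The set of irreducible complex characters of a group `G`. -/
def Irr (G : Type) [Group G] : Set (G → ℂ) :=
  {χ | ∃ V : FDRep ℂ G, CategoryTheory.Simple V ∧ FDRep.character V = χ}

/-- The set of irreducible complex characters of `G` whose degree is coprime to `p`. -/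
def IrrCoprime (p : ℕ) (G : Type) [Group G] : Set (G → ℂ) :=
  {χ | ∃ V : FDRep ℂ G, CategoryTheory.Simple V ∧ FDRep.character V = χ ∧
    Nat.Coprime (Module.finrank ℂ V) p}

/-!
A colouring `c` of `Fin n` together with a family `α` of characters of `Fˣ` defines a linear
character of the parabolic subgroup of block upper triangular matrices of `GL_n(F)`, as the product
of the `α_k ∘ det` over the diagonal blocks, and a linear character of the stabiliser of `c` in
`Fˣ ≀ S_n`. By Mackey's formula and the Bruhat decomposition, the two families of induced characters
have the same Gram matrix. On the wreath product side the matrix of multiplicities of irreducible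
characters has an integral left inverse: the coloured linear characters separate class functions,
and pairing them with the sign-twisted characters of the conjugate colourings gives a unitriangular
matrix, as for Young subgroups of symmetric groups. Hence the equality of Gram matrices yields an
embedding of `Irr (Fˣ ≀ S_n)` into `Irr (GL_n(F))`. Summing over the families with pairwise distinct
colours, it turns the degree of `ψ` into the dimension of the fixed space `χ^U` of the unitriangular
group `U`, and this dimension is `0` off the image. Finally, `χ(1) ≡ dim χ^U` modulo `q - 1`, so
coprimality of the degree to a divisor `p ≠ 1` of `q - 1` is preserved.
-/

namespace MonomialCorrespondence

open CategoryTheory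

section ClassFunctions

variable {G : Type} [Group G]

/-- A class function: a function constant on conjugacy classes. -/
def IsClassFunction (f : G → ℂ) : Prop :=
  ∀ g h : G, f (h * g * h⁻¹) = f g

lemma isClassFunction_of_mem_irr {χ : G → ℂ} (hχ : χ ∈ Irr G) : IsClassFunction χ := by
  obtain ⟨V, _, rfl⟩ := hχ
  exact V.char_conj

lemma simple_of_isIrreducible [Finite G] {V : Type} [AddCommGroup V] [Module ℂ V]
    [Module.Finite ℂ V] (ρ : Representation ℂ G V) [ρ.IsIrreducible] : Simple (FDRep.of ρ) := by
  have := Fintype.ofFinite G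
  rw [FDRep.simple_iff_char_is_norm_one]
  have : Invertible (Nat.card G : ℂ) := invertibleOfNonzero (by simp)
  have norm_one := Representation.card_inv_mul_sum_char_mul_char_eq_finrank ρ ρ
  rw [Representation.IsIrreducible.finrank_intertwiningMap_self] at norm_one
  have card_ne_zero : (Nat.card G : ℂ) ≠ 0 := by simp
  field_simp at norm_one
  rwa [Nat.cast_one, mul_one] at norm_one

variable [Fintype G]

/-- The symmetric pairing `⟨f, g⟩ = |G|⁻¹ ∑ f(x) g(x⁻¹)`, linear in `f`. On characters it is the
usual inner product. -/
def pairing (g : G → ℂ) : (G → ℂ) →ₗ[ℂ] ℂ :=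
  (Nat.card G : ℂ)⁻¹ • ∑ x, g x⁻¹ • LinearMap.proj x

lemma pairing_apply (g f : G → ℂ) :
    pairing g f = (Nat.card G : ℂ)⁻¹ * ∑ x, f x * g x⁻¹ := by
  simp [pairing, LinearMap.sum_apply, mul_comm]

lemma pairing_comm (f g : G → ℂ) : pairing g f = pairing f g := by
  rw [pairing_apply, pairing_apply]
  congr 1
  refine Fintype.sum_equiv (Equiv.inv G) _ _ fun x ↦ ?_
  rw [Equiv.inv_apply, inv_inv, mul_comm]

lemma pairing_irr {χ ψ : G → ℂ} (hχ : χ ∈ Irr G) (hψ : ψ ∈ Irr G) :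
    pairing ψ χ = if χ = ψ then 1 else 0 := by
  obtain ⟨V, hV, rfl⟩ := hχ
  obtain ⟨W, hW, rfl⟩ := hψ
  have : Invertible (Nat.card G : ℂ) := invertibleOfNonzero (by simp)
  have orthonormal (U : FDRep ℂ G) [Simple U] :
      pairing U.character V.character = if Nonempty (V ≅ U) then 1 else 0 := by
    rw [pairing_apply]
    exact FDRep.char_orthonormal V U
  split_ifs with h
  · rw [← h, orthonormal V, if_pos ⟨Iso.refl V⟩]
  · rw [orthonormal W, if_neg]
    rintro ⟨i⟩
    exact h (FDRep.char_iso i)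

/-- The element `∑ f(g⁻¹) g` of the group algebra. On a representation with character `χ` its
trace is `|G| ⟨f, χ⟩`. -/
def groupAlgebraElement (f : G → ℂ) : MonoidAlgebra ℂ G :=
  ∑ g, MonoidAlgebra.single g (f g⁻¹)

lemma coeff_groupAlgebraElement (f : G → ℂ) (g : G) :
    (groupAlgebraElement f).coeff g = f g⁻¹ := by
  simp [groupAlgebraElement, MonoidAlgebra.coeff_sum, Finsupp.finsetSum_apply,
    Finsupp.single_apply]

lemma IsClassFunction.groupAlgebraElement_mul_comm {f : G → ℂ} (hf : IsClassFunction f)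
    (y : MonoidAlgebra ℂ G) : groupAlgebraElement f * y = y * groupAlgebraElement f := by
  induction y using MonoidAlgebra.induction_linear with
  | zero => simp
  | add a b ha hb => rw [mul_add, add_mul, ha, hb]
  | single g a =>
    rw [groupAlgebraElement, Finset.sum_mul, Finset.mul_sum]
    refine Fintype.sum_equiv (MulAut.conj g⁻¹).toEquiv _ _ fun x ↦ ?_
    simp only [MulEquiv.toEquiv_eq_coe, MulEquiv.coe_toEquiv, MulAut.conj_apply, inv_inv,
      MonoidAlgebra.single_mul_single]
    congr 1
    · group
    · rw [mul_comm, ← hf x⁻¹ g⁻¹]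
      congr 2
      group

lemma trace_groupAlgebraElement {V : Type} [AddCommGroup V] [Module ℂ V]
    (ρ : Representation ℂ G V) (f : G → ℂ) :
    LinearMap.trace ℂ V (ρ.asAlgebraHom (groupAlgebraElement f)) =
      Nat.card G * pairing ρ.character f := by
  rw [pairing_apply, mul_inv_cancel_left₀ (by simp), groupAlgebraElement, map_sum, map_sum]
  refine Fintype.sum_equiv (Equiv.inv G) _ _ fun x ↦ ?_
  simp [Representation.asAlgebraHom_single, Representation.character]

/-- By Schur's lemma a central element acts on a simple module as a scalar, which vanishes as soon
as the trace does. -/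
lemma smul_eq_zero_of_isSimpleModule {f : G → ℂ} (hf : IsClassFunction f)
    (h : ∀ χ ∈ Irr G, pairing χ f = 0) {S : Type} [AddCommGroup S] [Module (MonoidAlgebra ℂ G) S]
    [IsSimpleModule (MonoidAlgebra ℂ G) S] (s : S) : groupAlgebraElement f • s = 0 := by
  let _ : Module ℂ S := Module.compHom S (algebraMap ℂ (MonoidAlgebra ℂ G))
  have : IsScalarTower ℂ (MonoidAlgebra ℂ G) S := ⟨fun a b c ↦ by
    change _ = (algebraMap ℂ (MonoidAlgebra ℂ G) a) • (b • c)
    rw [← mul_smul, Algebra.smul_def]⟩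
  have : FiniteDimensional ℂ S := Module.Finite.trans (MonoidAlgebra ℂ G) S
  let L : S →ₗ[MonoidAlgebra ℂ G] S :=
    { toFun s := groupAlgebraElement f • s
      map_add' := smul_add _
      map_smul' a s := by
        rw [RingHom.id_apply, ← mul_smul, hf.groupAlgebraElement_mul_comm, mul_smul] }
  obtain ⟨c, hc⟩ := (IsSimpleModule.algebraMap_end_bijective_of_isAlgClosed
    (A := MonoidAlgebra ℂ G) (V := S) ℂ).2 L
  let ρ : Representation ℂ G S := Representation.ofModule' S
  have hρ (r : MonoidAlgebra ℂ G) (s : S) : ρ.asAlgebraHom r s = r • s := by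
    have : ρ.asAlgebraHom = Algebra.lsmul ℂ ℂ S := by
      simp [ρ, Representation.ofModule', Representation.asAlgebraHom]
    rw [this, Algebra.lsmul_coe]
  have : ρ.IsIrreducible := by
    rw [Representation.irreducible_iff_isSimpleModule_asModule]
    exact IsSimpleModule.congr
      { ρ.asModuleEquiv with
        map_smul' r x := (ρ.asModuleEquiv_map_smul r x).trans (hρ r _) }
  have scalar : ρ.asAlgebraHom (groupAlgebraElement f) = c • (1 : Module.End ℂ S) := by
    ext s
    rw [hρ]
    change L s = _
    rw [← hc]
    rfl
  have trace_eq_zero : c * Module.finrank ℂ S = 0 := by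
    rw [← LinearMap.trace_one, ← smul_eq_mul, ← map_smul, ← scalar, trace_groupAlgebraElement]
    exact mul_eq_zero_of_right _ (h _ ⟨_, simple_of_isIrreducible ρ, rfl⟩)
  have : Nontrivial S := IsSimpleModule.nontrivial (MonoidAlgebra ℂ G) S
  have hc_zero : c = 0 := by simpa [Module.finrank_pos.ne'] using trace_eq_zero
  rw [← hρ, scalar, hc_zero, zero_smul, LinearMap.zero_apply]

/-- `groupAlgebraElement f` kills the regular module, which is a sum of simple ones. -/
lemma eq_zero_of_pairing_irr_eq_zero {f : G → ℂ} (hf : IsClassFunction f)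
    (h : ∀ χ ∈ Irr G, pairing χ f = 0) : f = 0 := by
  let annihilated : Submodule (MonoidAlgebra ℂ G) (MonoidAlgebra ℂ G) :=
    { carrier := {s | groupAlgebraElement f * s = 0}
      add_mem' {a b} ha hb := by
        rw [Set.mem_ofPred_eq, mul_add, ha, hb, add_zero]
      zero_mem' := mul_zero _
      smul_mem' a b hb := by
        rw [Set.mem_ofPred_eq, smul_eq_mul, ← mul_assoc, hf.groupAlgebraElement_mul_comm,
          mul_assoc, hb, mul_zero] }
  have annihilated_eq_top : annihilated = ⊤ := by
    rw [eq_top_iff, ← IsSemisimpleModule.sSup_simples_eq_top]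
    refine sSup_le fun S (hS : IsSimpleModule _ S) s hs ↦ ?_
    exact congrArg Subtype.val (smul_eq_zero_of_isSimpleModule hf h (⟨s, hs⟩ : S))
  have element_eq_zero : groupAlgebraElement f = 0 := by
    have : (1 : MonoidAlgebra ℂ G) ∈ annihilated := annihilated_eq_top ▸ Submodule.mem_top
    rwa [← mul_one (groupAlgebraElement f)]
  funext g
  rw [← inv_inv g, ← coeff_groupAlgebraElement f g⁻¹, element_eq_zero]
  rfl

lemma pairing_sum_smul_irr (s : Finset (Irr G)) (c : Irr G → ℂ) (ψ : Irr G) :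
    pairing ψ.1 (∑ χ ∈ s, c χ • χ.1) = if ψ ∈ s then c ψ else 0 := by
  simp only [map_sum, map_smul, smul_eq_mul, pairing_irr (Subtype.prop _) ψ.2, mul_ite, mul_one,
    mul_zero, ← Subtype.ext_iff, Finset.sum_ite_eq']

end ClassFunctions

section FiniteIrr

variable {G : Type} [Group G] [Finite G]

lemma linearIndependent_irr : LinearIndependent ℂ (Subtype.val : Irr G → G → ℂ) := by
  have := Fintype.ofFinite G
  rw [linearIndependent_iff']
  intro s c hc ψ hψ
  have := pairing_sum_smul_irr s c ψ
  rwa [hc, map_zero, if_pos hψ, eq_comm] at this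

instance instFiniteIrr : Finite (Irr G) := linearIndependent_irr.finite

instance instFintypeIrr : Fintype (Irr G) := Fintype.ofFinite _

end FiniteIrr

section Induction

lemma sum_extend_mul {ι κ : Type} [Fintype ι] [Fintype κ] {e : κ → ι} (he : Function.Injective e)
    (φ : κ → ℂ) (f : ι → ℂ) :
    ∑ i, Function.extend e φ 0 i * f i = ∑ k, φ k * f (e k) := by
  refine (Fintype.sum_of_injective e he _ _ (fun i hi ↦ ?_) fun k ↦ ?_).symm
  · rw [Function.extend_apply' _ _ _ hi, Pi.zero_apply, zero_mul]
  · rw [he.extend_apply]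

variable {G : Type} [Group G] [Fintype G]

lemma IsClassFunction.eq_sum_pairing_smul {f : G → ℂ} (hf : IsClassFunction f) :
    f = ∑ χ : Irr G, pairing χ.1 f • χ.1 := by
  rw [← sub_eq_zero]
  apply eq_zero_of_pairing_irr_eq_zero
  · intro g h
    simp only [Pi.sub_apply, Finset.sum_apply, Pi.smul_apply, hf g h,
      isClassFunction_of_mem_irr (Subtype.prop _) g h]
  · intro ψ hψ
    rw [map_sub, pairing_sum_smul_irr Finset.univ _ ⟨ψ, hψ⟩, if_pos (Finset.mem_univ _), sub_self]

/-- The multiplicity of the linear character `l` of `P` in the restriction of `f` to `P`. -/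
def multiplicity (P : Subgroup G) (l : P →* ℂˣ) : (G → ℂ) →ₗ[ℂ] ℂ :=
  pairing (fun p : P ↦ (l p : ℂ)) ∘ₗ LinearMap.funLeft ℂ ℂ P.subtype

lemma multiplicity_apply (P : Subgroup G) (l : P →* ℂˣ) (f : G → ℂ) :
    multiplicity P l f = (Nat.card P : ℂ)⁻¹ * ∑ p : P, f p * (l p⁻¹ : ℂˣ) := by
  simp [multiplicity, pairing_apply, LinearMap.funLeft_apply]

lemma multiplicity_one_apply (P : Subgroup G) (f : G → ℂ) :
    multiplicity P 1 f = (Nat.card P : ℂ)⁻¹ * ∑ p : P, f p := by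
  simp [multiplicity_apply]

lemma multiplicity_one_of_subsingleton (P : Subgroup G) [Subsingleton P] (f : G → ℂ) :
    multiplicity P 1 f = f 1 := by
  have : Unique P := uniqueOfSubsingleton 1
  rw [multiplicity_one_apply, Nat.card_unique, Nat.cast_one, inv_one, one_mul,
    Fintype.sum_subsingleton _ 1, Subgroup.coe_one]

/-- The multiplicity is the dimension of the invariants of `l⁻¹ ⊗ V`. -/
lemma exists_nat_eq_multiplicity (P : Subgroup G) (l : P →* ℂˣ) {χ : G → ℂ} (hχ : χ ∈ Irr G) :
    ∃ k : ℕ, multiplicity P l χ = k := by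
  obtain ⟨V, _, rfl⟩ := hχ
  let ρ : Representation ℂ P V :=
    { toFun p := (l p⁻¹ : ℂ) • V.ρ p
      map_one' := by simp
      map_mul' p q := by
        ext v
        simp [smul_smul, mul_comm] }
  have : Invertible (Nat.card P : ℂ) := invertibleOfNonzero (by simp)
  have character_eq (p : P) : ρ.character p = V.character p * (l p⁻¹ : ℂˣ) := by
    rw [mul_comm]
    exact (LinearMap.trace ℂ V).map_smul _ _
  refine ⟨Module.finrank ℂ ρ.invariants, ?_⟩
  rw [← Representation.card_inv_mul_sum_char_eq_finrank, multiplicity_apply]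
  simp only [character_eq]

/-- The class function of `G` induced from a function on a subgroup. -/
def induced (P : Subgroup G) (φ : P → ℂ) (g : G) : ℂ :=
  (Nat.card P : ℂ)⁻¹ * ∑ x : G, Function.extend Subtype.val φ 0 (x * g * x⁻¹)

lemma isClassFunction_induced (P : Subgroup G) (φ : P → ℂ) : IsClassFunction (induced P φ) := by
  intro g h
  unfold induced
  congr 1
  refine Fintype.sum_equiv (Equiv.mulRight h) _ _ fun x ↦ ?_
  rw [Equiv.coe_mulRight]
  congr 1
  group

lemma pairing_induced (P : Subgroup G) (φ : P → ℂ) {f : G → ℂ} (hf : IsClassFunction f) :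
    pairing f (induced P φ) = pairing (fun p : P ↦ f p) φ := by
  have conj_sum (x : G) :
      ∑ g, Function.extend Subtype.val φ 0 (x * g * x⁻¹) * f g⁻¹ = ∑ p : P, φ p * f (p : G)⁻¹ := by
    rw [← sum_extend_mul Subtype.val_injective φ fun g ↦ f g⁻¹]
    refine Fintype.sum_equiv (MulAut.conj x).toEquiv _ _ fun g ↦ ?_
    rw [MulEquiv.toEquiv_eq_coe, MulEquiv.coe_toEquiv, MulAut.conj_apply, ← hf g⁻¹ x]
    congr 2
    group
  simp only [pairing_apply, induced, mul_assoc, Finset.sum_mul, ← Finset.mul_sum]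
  rw [Finset.sum_comm]
  simp only [← mul_assoc _ _ (_⁻¹ : G), conj_sum, Finset.sum_const, Finset.card_univ,
    nsmul_eq_mul, Subgroup.coe_inv]
  rw [← Nat.card_eq_fintype_card, mul_left_comm, inv_mul_cancel_left₀ (by simp)]

lemma sum_multiplicity_mul_multiplicity (P Q : Subgroup G) (l : P →* ℂˣ) (m : Q →* ℂˣ) :
    ∑ χ : Irr G, multiplicity P l χ.1 * multiplicity Q m χ.1 =
      multiplicity Q m (induced P fun p ↦ l p) := by
  rw [(isClassFunction_induced P _).eq_sum_pairing_smul, map_sum]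
  refine Finset.sum_congr rfl fun χ _ ↦ ?_
  rw [map_smul, smul_eq_mul, pairing_induced P _ (isClassFunction_of_mem_irr χ.2), pairing_comm]
  rfl

end Induction

section Mackey

variable {G : Type} [Group G] {P Q : Subgroup G}

/-- The condition in Mackey's formula: the linear characters `l` of `P` and `m` of `Q` agree, after
conjugation by `x`, on `P ∩ x Q x⁻¹`. -/
def Intertwines (l : P →* ℂˣ) (m : Q →* ℂˣ) (x : G) : Prop :=
  ∀ (p : P) (q : Q), (p : G) * x = x * q → l p = m q

lemma Intertwines.mul_mul {l : P →* ℂˣ} {m : Q →* ℂˣ} {x : G} (h : Intertwines l m x) (a : P)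
    (b : Q) : Intertwines l m (a * x * b) := by
  intro p q hpq
  have conj := h (a⁻¹ * p * a) (b * q * b⁻¹) <| by
    have : (p : G) = (a * x * b) * q * (a * x * b)⁻¹ := by rw [← hpq]; group
    simp only [Subgroup.coe_mul, Subgroup.coe_inv, this]
    group
  simpa [mul_comm, mul_left_comm] using conj

/-- The double cosets in `P \ G / Q` whose elements intertwine `l` and `m`. -/
def intertwiningDoubleCosets (l : P →* ℂˣ) (m : Q →* ℂˣ) :
    Set (DoubleCoset.Quotient (P : Set G) (Q : Set G)) :=
  {D | ∃ x, Intertwines l m x ∧ DoubleCoset.mk P Q x = D}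

lemma mk_mem_intertwiningDoubleCosets {l : P →* ℂˣ} {m : Q →* ℂˣ} {x : G} :
    DoubleCoset.mk P Q x ∈ intertwiningDoubleCosets l m ↔ Intertwines l m x := by
  refine ⟨?_, fun h ↦ ⟨x, h, rfl⟩⟩
  rintro ⟨y, hy, hyx⟩
  obtain ⟨a, ha, b, hb, rfl⟩ := (DoubleCoset.eq P Q y x).1 hyx
  exact hy.mul_mul ⟨a, ha⟩ ⟨b, hb⟩

variable (P Q) in
/-- The action `(p, q) • x = p x q⁻¹`, whose orbits are the double cosets. -/
@[reducible] def doubleCosetAction : MulAction (P × Q) G where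
  smul a x := a.1 * x * (a.2 : G)⁻¹
  one_smul x := by
    change ((1 : P) : G) * x * ((1 : Q) : G)⁻¹ = x
    simp
  mul_smul a b x := by
    change ((a.1 * b.1 : P) : G) * x * ((a.2 * b.2 : Q) : G)⁻¹ = a.1 * (b.1 * x * (b.2 : G)⁻¹) * _
    simp [mul_assoc]

attribute [local instance] doubleCosetAction

lemma mem_doubleCoset_stabilizer {x : G} {a : P × Q} :
    a ∈ MulAction.stabilizer (P × Q) x ↔ (a.1 : G) * x = x * a.2 :=
  mul_inv_eq_iff_eq_mul

lemma mem_doubleCoset_orbit {x y : G} :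
    y ∈ MulAction.orbit (P × Q) x ↔ DoubleCoset.mk P Q y = DoubleCoset.mk P Q x := by
  rw [eq_comm, DoubleCoset.eq]
  constructor
  · rintro ⟨⟨p, q⟩, rfl⟩
    exact ⟨p, p.2, (q : G)⁻¹, inv_mem q.2, rfl⟩
  · rintro ⟨p, hp, q, hq, rfl⟩
    exact ⟨(⟨p, hp⟩, ⟨q⁻¹, inv_mem hq⟩), congrArg (p * x * ·) (inv_inv q)⟩

lemma sum_stabilizer_eq_ite [Fintype G] (l : P →* ℂˣ) (m : Q →* ℂˣ) (x : G) :
    ∑ a : MulAction.stabilizer (P × Q) x, ((l a.1.1 * m a.1.2⁻¹ : ℂˣ) : ℂ) =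
      if Intertwines l m x then (Nat.card (MulAction.stabilizer (P × Q) x) : ℂ) else 0 := by
  let f : MulAction.stabilizer (P × Q) x →* ℂˣ :=
    (l.comp (MonoidHom.fst P Q) / m.comp (MonoidHom.snd P Q)).comp (Subgroup.subtype _)
  have f_apply (a : MulAction.stabilizer (P × Q) x) : f a = l a.1.1 * m a.1.2⁻¹ := by
    rw [map_inv, ← div_eq_mul_inv]
    rfl
  have f_eq_one : (Units.coeHom ℂ).comp f = 1 ↔ Intertwines l m x := by
    simp only [DFunLike.ext_iff, MonoidHom.comp_apply, Units.coeHom_apply, MonoidHom.one_apply,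
      Units.val_eq_one, f_apply, map_inv, mul_inv_eq_one, Subtype.forall, Prod.forall,
      mem_doubleCoset_stabilizer, Intertwines]
  have := sum_hom_units ((Units.coeHom ℂ).comp f)
  simp only [f_eq_one, MonoidHom.comp_apply, Units.coeHom_apply, f_apply] at this
  rw [this, Nat.card_eq_fintype_card]
  split_ifs <;> simp

lemma card_filter_mk_mul_card_stabilizer [Fintype G] (x : G) :
    (Finset.univ.filter fun y ↦ DoubleCoset.mk P Q y = DoubleCoset.mk P Q x).card *
      Nat.card (MulAction.stabilizer (P × Q) x) = Nat.card P * Nat.card Q := by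
  rw [← Nat.card_prod, Nat.card_eq_fintype_card, Nat.card_eq_fintype_card,
    ← MulAction.card_orbit_mul_card_stabilizer_eq_card_group (P × Q) x, ← Set.toFinset_card]
  congr 2
  ext y
  rw [Finset.mem_filter_univ, Set.mem_toFinset, mem_doubleCoset_orbit]

lemma multiplicity_induced (l : P →* ℂˣ) (m : Q →* ℂˣ) [Fintype G] :
    multiplicity Q m (induced P fun p ↦ l p) = (Nat.card P * Nat.card Q : ℂ)⁻¹ *
      ∑ x : G, ∑ a : MulAction.stabilizer (P × Q) x, ((l a.1.1 * m a.1.2⁻¹ : ℂˣ) : ℂ) := by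
  have inner (x : G) : ∑ a : MulAction.stabilizer (P × Q) x, ((l a.1.1 * m a.1.2⁻¹ : ℂˣ) : ℂ) =
      ∑ q : Q, Function.extend Subtype.val (fun p ↦ (l p : ℂ)) 0 (x * q * x⁻¹) *
        (m q⁻¹ : ℂˣ) := by
    refine Fintype.sum_of_injective (fun a ↦ a.1.2) ?_ _ _ ?_ ?_
    · rintro ⟨⟨p, q⟩, h⟩ ⟨⟨p', q'⟩, h'⟩ (rfl : q = q')
      rw [mem_doubleCoset_stabilizer] at h h'
      have : p = p' := Subtype.ext (mul_right_cancel (h.trans h'.symm))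
      subst this
      rfl
    · intro q hq
      rw [Function.extend_apply', Pi.zero_apply, zero_mul]
      rintro ⟨p, hp⟩
      exact hq ⟨⟨(p, q), mem_doubleCoset_stabilizer.2 (by simp [hp])⟩, rfl⟩
    · rintro ⟨⟨p, q⟩, h⟩
      rw [mem_doubleCoset_stabilizer, ← eq_mul_inv_iff_mul_eq] at h
      rw [← h, Subtype.val_injective.extend_apply, Units.val_mul]
  simp only [inner, multiplicity_apply, induced, mul_inv, Finset.mul_sum, Finset.sum_mul]
  rw [Finset.sum_comm]
  exact Finset.sum_congr rfl fun x _ ↦ Finset.sum_congr rfl fun q _ ↦ by ring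

/-- Mackey's formula for the number of double cosets intertwining two linear characters. -/
lemma sum_multiplicity_mul_eq_ncard [Fintype G] (l : P →* ℂˣ) (m : Q →* ℂˣ) :
    ∑ χ : Irr G, multiplicity P l χ.1 * multiplicity Q m χ.1 =
      (intertwiningDoubleCosets l m).ncard := by
  let fibre (D : DoubleCoset.Quotient (P : Set G) (Q : Set G)) : Finset G :=
    Finset.univ.filter fun y ↦ DoubleCoset.mk P Q y = D
  have card_fibre_ne_zero (D) : ((fibre D).card : ℂ) ≠ 0 := by
    obtain ⟨x, rfl⟩ := Quotient.exists_rep D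
    exact Nat.cast_ne_zero.2 (Finset.card_pos.2 ⟨x, by simp [fibre]⟩).ne'
  have card_ne_zero : (Nat.card P * Nat.card Q : ℂ) ≠ 0 := by simp
  have weight (x : G) : (if Intertwines l m x then
      (Nat.card (MulAction.stabilizer (P × Q) x) : ℂ) else 0) =
      Nat.card P * Nat.card Q * if DoubleCoset.mk P Q x ∈ intertwiningDoubleCosets l m then
        ((fibre (DoubleCoset.mk P Q x)).card : ℂ)⁻¹ else 0 := by
    rw [mk_mem_intertwiningDoubleCosets, mul_ite, mul_zero, ← Nat.cast_mul,
      ← card_filter_mk_mul_card_stabilizer x, Nat.cast_mul, mul_right_comm,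
      mul_inv_cancel₀ (card_fibre_ne_zero _), one_mul]
  have : Fintype (DoubleCoset.Quotient (P : Set G) (Q : Set G)) :=
    Fintype.ofSurjective (DoubleCoset.mk P Q) Quotient.mk_surjective
  rw [sum_multiplicity_mul_multiplicity, multiplicity_induced]
  simp only [sum_stabilizer_eq_ite, weight, ← Finset.mul_sum]
  rw [inv_mul_cancel_left₀ card_ne_zero, ← Finset.sum_fiberwise _ (DoubleCoset.mk P Q)]
  calc _ = ∑ D, if D ∈ intertwiningDoubleCosets l m then (1 : ℂ) else 0 := by
        refine Finset.sum_congr rfl fun D _ ↦ ?_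
        rw [Finset.sum_congr rfl fun x hx ↦ by rw [(Finset.mem_filter.1 hx).2], Finset.sum_const,
          nsmul_eq_mul, mul_ite, mul_inv_cancel₀ (card_fibre_ne_zero D), mul_zero]
    _ = _ := by
        rw [Finset.sum_boole, Set.ncard_eq_toFinset_card']
        congr 2
        ext D
        simp

lemma ncard_intertwiningDoubleCosets_congr {M : Type} [Group M] {P' Q' : Subgroup M}
    {l : P →* ℂˣ} {m : Q →* ℂˣ} {l' : P' →* ℂˣ} {m' : Q' →* ℂˣ} (e : M → G)
    (mk_surj : ∀ g, ∃ x, DoubleCoset.mk P Q (e x) = DoubleCoset.mk P Q g)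
    (mk_iff : ∀ x y, DoubleCoset.mk P Q (e x) = DoubleCoset.mk P Q (e y) ↔
      DoubleCoset.mk P' Q' x = DoubleCoset.mk P' Q' y)
    (intertwines_iff : ∀ x, Intertwines l m (e x) ↔ Intertwines l' m' x) :
    (intertwiningDoubleCosets l m).ncard = (intertwiningDoubleCosets l' m').ncard := by
  let f : DoubleCoset.Quotient (P' : Set M) (Q' : Set M) →
      DoubleCoset.Quotient (P : Set G) (Q : Set G) :=
    Quotient.lift (fun x ↦ DoubleCoset.mk P Q (e x)) fun x y h ↦
      (mk_iff x y).2 (Quotient.sound h)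
  have f_injective : Function.Injective f := by
    rintro ⟨x⟩ ⟨y⟩ h
    exact (mk_iff x y).1 h
  have image_eq : f '' intertwiningDoubleCosets l' m' = intertwiningDoubleCosets l m := by
    ext ⟨g⟩
    obtain ⟨x, hx⟩ := mk_surj g
    change DoubleCoset.mk P Q g ∈ _ ↔ DoubleCoset.mk P Q g ∈ _
    rw [← hx, mk_mem_intertwiningDoubleCosets, intertwines_iff, ← mk_mem_intertwiningDoubleCosets]
    exact f_injective.mem_set_image (a := DoubleCoset.mk P' Q' x)
  rw [← image_eq, Set.ncard_image_of_injective _ f_injective]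

lemma ncard_intertwiningDoubleCosets_eq_zero {l : P →* ℂˣ} {m : Q →* ℂˣ}
    (h : ∀ x, ¬ Intertwines l m x) : (intertwiningDoubleCosets l m).ncard = 0 := by
  have : intertwiningDoubleCosets l m = ∅ :=
    Set.eq_empty_of_forall_notMem fun _ ⟨x, hx, _⟩ ↦ h x hx
  rw [this, Set.ncard_empty]

lemma ncard_intertwiningDoubleCosets_eq_one {l : P →* ℂˣ} {m : Q →* ℂˣ} {x : G}
    (hx : Intertwines l m x)
    (h : ∀ y, Intertwines l m y → DoubleCoset.mk P Q y = DoubleCoset.mk P Q x) :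
    (intertwiningDoubleCosets l m).ncard = 1 := by
  rw [Set.ncard_eq_one]
  refine ⟨DoubleCoset.mk P Q x, Set.eq_singleton_iff_unique_mem.2 ⟨⟨x, hx, rfl⟩, ?_⟩⟩
  rintro _ ⟨y, hy, rfl⟩
  exact h y hy

end Mackey

section Wreath

variable {K ι L L' : Type} [CommGroup K]

/-- The wreath product of `K` with the symmetric group on `ι`. -/
abbrev Wreath (K ι : Type) [Group K] : Type :=
  (ι → K) ⋊[mulAutArrow] Equiv.Perm ι

instance instFintypeWreath [Finite K] [Finite ι] : Fintype (Wreath K ι) :=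
  have : Finite (Wreath K ι) := Finite.of_equiv _ SemidirectProduct.equivProd.symm
  Fintype.ofFinite _

lemma wreath_mul_left_apply (a b : Wreath K ι) (i : ι) :
    (a * b).left i = a.left i * b.left (a.right⁻¹ i) := rfl

/-- The permutations preserving a colouring. -/
def colourPerms (c : ι → L) : Subgroup (Equiv.Perm ι) where
  carrier := {u | ∀ i, c (u i) = c i}
  mul_mem' hu hv i := (hu _).trans (hv i)
  one_mem' _ := rfl
  inv_mem' {u} hu i := (hu (u⁻¹ i)).symm.trans (congrArg c (u.apply_symm_apply i))

lemma mem_colourPerms_of_forall_le [Finite ι] [LinearOrder L] {c : ι → L} {u : Equiv.Perm ι}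
    (h : ∀ i, c (u i) ≤ c i) : u ∈ colourPerms c := by
  have pow_le (m : ℕ) (i : ι) : c ((u ^ m) i) ≤ c i := by
    induction m with
    | zero => simp
    | succ m ih => rw [pow_succ']; exact (h _).trans ih
  intro i
  refine (h i).antisymm ?_
  have pow_apply : (u ^ (orderOf u - 1)) (u i) = i := by
    rw [← Equiv.Perm.mul_apply, ← pow_succ, Nat.sub_add_cancel (orderOf_pos u), pow_orderOf_eq_one,
      Equiv.Perm.one_apply]
  simpa only [pow_apply] using pow_le (orderOf u - 1) (u i)

/-- The subgroup of the wreath product formed by the elements whose permutation preserves the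
colouring `c`. -/
def colourStabilizer (K : Type) [CommGroup K] (c : ι → L) : Subgroup (Wreath K ι) :=
  (colourPerms c).comap SemidirectProduct.rightHom

lemma mem_colourStabilizer {c : ι → L} {x : Wreath K ι} :
    x ∈ colourStabilizer K c ↔ x.right ∈ colourPerms c := Iff.rfl

lemma inl_mem_colourStabilizer (c : ι → L) (t : ι → K) :
    SemidirectProduct.inl t ∈ colourStabilizer K c := one_mem (colourPerms c)

lemma prod_colour_comp [Fintype ι] {M : Type} [CommMonoid M] {c : ι → L} {u : Equiv.Perm ι}
    (hu : u ∈ colourPerms c) (α : L → K →* M) (t : ι → K) :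
    ∏ i, α (c i) (t (u⁻¹ i)) = ∏ i, α (c i) (t i) := by
  rw [← Equiv.prod_comp u]
  exact Finset.prod_congr rfl fun i _ ↦ by rw [hu i, Equiv.Perm.inv_def, u.symm_apply_apply]

/-- The linear character `(t, w) ↦ (∏ i, α (c i) (t i)) * s w` of the stabiliser of `c`. -/
def colourCharacter [Fintype ι] (c : ι → L) (α : L → K →* ℂˣ) (s : Equiv.Perm ι →* ℂˣ) :
    colourStabilizer K c →* ℂˣ where
  toFun x := (∏ i, α (c i) (x.1.left i)) * s x.1.right
  map_one' := by simp
  map_mul' x y := by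
    simp only [Subgroup.coe_mul, wreath_mul_left_apply, SemidirectProduct.mul_right, map_mul,
      Finset.prod_mul_distrib]
    rw [prod_colour_comp (mem_colourStabilizer.1 x.2) α y.1.left]
    exact mul_mul_mul_comm _ _ _ _

lemma colourCharacter_apply [Fintype ι] (c : ι → L) (α : L → K →* ℂˣ) (s : Equiv.Perm ι →* ℂˣ)
    (x : colourStabilizer K c) :
    colourCharacter c α s x = (∏ i, α (c i) (x.1.left i)) * s x.1.right := rfl

lemma inl_mulSingle_mul (x : Wreath K ι) (i : ι) (a : K) :
    SemidirectProduct.inl (Pi.mulSingle (x.right i) a) * x =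
      x * SemidirectProduct.inl (Pi.mulSingle i a) := by
  ext j
  · rw [wreath_mul_left_apply, wreath_mul_left_apply, mul_comm]
    simp [Pi.mulSingle_apply, Equiv.symm_apply_eq, eq_comm (a := j)]
  · simp

lemma mk_colourStabilizer_eq_iff {c : ι → L} {d : ι → L'} {x y : Wreath K ι} :
    DoubleCoset.mk (colourStabilizer K c) (colourStabilizer K d) x = DoubleCoset.mk _ _ y ↔
      ∃ u ∈ colourPerms c, ∃ v ∈ colourPerms d, y.right = u * x.right * v := by
  rw [DoubleCoset.eq]
  constructor
  · rintro ⟨p, hp, q, hq, rfl⟩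
    exact ⟨p.right, hp, q.right, hq, rfl⟩
  · rintro ⟨u, hu, v, hv, h⟩
    refine ⟨y * (x * SemidirectProduct.inr v)⁻¹, ?_, SemidirectProduct.inr v, hv, by group⟩
    simpa [mem_colourStabilizer, h, mul_assoc] using hu

lemma character_right_eq_of_conj {s : Equiv.Perm ι →* ℂˣ} {p q x : Wreath K ι}
    (hpq : p * x = x * q) : s p.right = s q.right := by
  have right_eq : p.right * x.right = x.right * q.right :=
    congrArg SemidirectProduct.right hpq
  have := congrArg s right_eq
  rwa [map_mul, map_mul, mul_comm, mul_right_inj] at this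

section Intertwining

variable [Fintype ι] {c : ι → L} {d : ι → L'} {α : L → K →* ℂˣ} {β : L' → K →* ℂˣ} {x : Wreath K ι}
  {s s' : Equiv.Perm ι →* ℂˣ}

lemma prod_left_eq_of_conj (h : ∀ i, α (c (x.right i)) = β (d i)) {p q : Wreath K ι}
    (hp : p ∈ colourStabilizer K c) (hpq : p * x = x * q) :
    ∏ i, α (c i) (p.left i) = ∏ i, β (d i) (q.left i) := by
  have left_eq (i : ι) :
      p.left i * x.left (p.right⁻¹ i) = x.left i * q.left (x.right⁻¹ i) :=
    congrFun (congrArg SemidirectProduct.left hpq) i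
  have prod_eq : ∏ i, α (c i) (p.left i * x.left (p.right⁻¹ i)) =
      ∏ i, α (c i) (x.left i * q.left (x.right⁻¹ i)) := by simp only [left_eq]
  simp only [map_mul, Finset.prod_mul_distrib] at prod_eq
  rw [prod_colour_comp (mem_colourStabilizer.1 hp) α x.left, mul_comm] at prod_eq
  replace prod_eq := mul_left_cancel prod_eq
  rw [prod_eq, ← Equiv.prod_comp x.right]
  exact Finset.prod_congr rfl fun i _ ↦ by rw [h, Equiv.Perm.inv_def, Equiv.symm_apply_apply]

lemma Intertwines.colour_eq (h : Intertwines (colourCharacter c α s) (colourCharacter d β s') x)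
    (i : ι) : α (c (x.right i)) = β (d i) := by
  ext1 a
  have := h ⟨_, (colourPerms c).one_mem⟩ ⟨_, (colourPerms d).one_mem⟩
    (inl_mulSingle_mul x i a)
  simpa [colourCharacter_apply, Pi.mulSingle_apply, apply_ite] using this

lemma intertwines_colourCharacter_iff :
    Intertwines (colourCharacter c α s) (colourCharacter d β s') x ↔
      (∀ i, α (c (x.right i)) = β (d i)) ∧ ∀ v ∈ colourPerms d,
        x.right * v * x.right⁻¹ ∈ colourPerms c → s v = s' v := by
  constructor
  · refine fun h ↦ ⟨h.colour_eq, fun v hv hxv ↦ ?_⟩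
    have conj : (x * SemidirectProduct.inr v * x⁻¹) * x = x * SemidirectProduct.inr v := by group
    have hp : x * SemidirectProduct.inr v * x⁻¹ ∈ colourStabilizer K c := by
      simpa [mem_colourStabilizer] using hxv
    have hq : SemidirectProduct.inr v ∈ colourStabilizer K d := hv
    have := h ⟨_, hp⟩ ⟨_, hq⟩ conj
    rw [colourCharacter_apply, colourCharacter_apply, prod_left_eq_of_conj h.colour_eq hp conj,
      mul_right_inj] at this
    exact (character_right_eq_of_conj (s := s) conj).symm.trans this
  · rintro ⟨hα, hs⟩ p q hpq
    rw [colourCharacter_apply, colourCharacter_apply, prod_left_eq_of_conj hα p.2 hpq,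
      character_right_eq_of_conj hpq]
    congr 1
    refine hs _ q.2 ?_
    have : p.1.right * x.right = x.right * q.1.right := congrArg SemidirectProduct.right hpq
    rw [← this, mul_inv_cancel_right]
    exact p.2

lemma intertwines_colourCharacter_one_iff :
    Intertwines (colourCharacter c α 1) (colourCharacter d β 1) x ↔
      ∀ i, α (c (x.right i)) = β (d i) := by
  rw [intertwines_colourCharacter_iff]
  simp

end Intertwining

end Wreath

section Parabolic

variable {F ι L L' R : Type} [Field F] [Fintype ι] [LinearOrder L] [LinearOrder L']

lemma toSquareBlock_mul {A B : Matrix ι ι F} {c : ι → L} (hA : A.BlockTriangular c)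
    (hB : B.BlockTriangular c) (k : L) :
    (A * B).toSquareBlock c k = A.toSquareBlock c k * B.toSquareBlock c k := by
  ext i j
  have off_block : ∀ x ∉ Finset.univ.filter (c · = k), A i x * B x j = 0 := by
    intro x hx
    rcases lt_or_gt_of_ne (by simpa using hx) with h | h
    · rw [hA (by rwa [i.2]), zero_mul]
    · rw [hB (by rwa [j.2]), mul_zero]
  rw [toSquareBlock_def, of_apply, mul_apply, mul_apply,
    ← Finset.sum_subset (Finset.subset_univ _) fun x _ ↦ off_block x]
  exact Finset.sum_subtype _ (by simp) _

variable [DecidableEq ι]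

/-- The parabolic subgroup of the invertible matrices that are block triangular for the
colouring `c`. -/
def parabolic (F : Type) [Field F] (c : ι → L) : Subgroup (GL ι F) where
  carrier := {g | g.1.BlockTriangular c}
  mul_mem' ha hb := Matrix.BlockTriangular.mul ha hb
  one_mem' := blockTriangular_one
  inv_mem' {a} ha := by
    have := a.isUnit.invertible
    simpa only [Set.mem_ofPred_eq, coe_units_inv] using blockTriangular_inv_of_blockTriangular ha

lemma mem_parabolic {c : ι → L} {g : GL ι F} :
    g ∈ parabolic F c ↔ ∀ i j, c j < c i → g.1 i j = 0 :=
  ⟨fun h i j ↦ @h i j, fun h i j ↦ h i j⟩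

/-- The determinant of the diagonal block of colour `k`. -/
def blockDet (c : ι → L) (k : L) : parabolic F c →* Fˣ :=
  MonoidHom.toHomUnits
    { toFun := fun p ↦ (p.1.1.toSquareBlock c k).det
      map_one' := by
        have : (1 : Matrix ι ι F).toSquareBlock c k = 1 := by
          ext i j
          simp [toSquareBlock_def, one_apply, Subtype.ext_iff]
        simp [this]
      map_mul' := fun a b ↦ by
        rw [← det_mul, ← toSquareBlock_mul a.2 b.2]
        rfl }

lemma coe_blockDet (c : ι → L) (k : L) (p : parabolic F c) :
    (blockDet c k p : F) = (p.1.1.toSquareBlock c k).det := rfl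

lemma blockDet_eq_one_of_notMem_range {c : ι → L} {k : L} (hk : k ∉ Set.range c)
    (p : parabolic F c) : blockDet c k p = 1 := by
  have : IsEmpty {i // c i = k} := ⟨fun i ↦ hk ⟨i, i.2⟩⟩
  exact Units.ext det_isEmpty

lemma det_toSquareBlock_comp [LinearOrder R] [Fintype R] {A : Matrix ι ι F} {r : ι → R}
    (hA : A.BlockTriangular r) (f : R → L) (k : L) :
    (A.toSquareBlock (f ∘ r) k).det =
      ∏ ρ, if f ρ = k then (A.toSquareBlock r ρ).det else 1 := by
  have blockTriangular : (A.toSquareBlock (f ∘ r) k).BlockTriangular (fun i ↦ r i.1) :=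
    fun _ _ hij ↦ hA hij
  rw [blockTriangular.det_fintype]
  refine Finset.prod_congr rfl fun ρ _ ↦ ?_
  split_ifs with h
  · let e : {a : {a // (f ∘ r) a = k} // r a.1 = ρ} ≃ {a // r a = ρ} :=
      { toFun := fun a ↦ ⟨a.1.1, a.2⟩
        invFun := fun a ↦ ⟨⟨a.1, by simp [a.2, h]⟩, a.2⟩
        left_inv := fun _ ↦ rfl
        right_inv := fun _ ↦ rfl }
    rw [← det_reindex_self e]
    rfl
  · have : IsEmpty {a : {a // (f ∘ r) a = k} // r a.1 = ρ} :=
      ⟨fun a ↦ h ((congrArg f a.2).symm.trans a.1.2)⟩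
    exact det_isEmpty

variable [Fintype L'] [Fintype L]

/-- The linear character `p ↦ ∏ k, α k (blockDet c k p)` of a parabolic subgroup. -/
def parabolicCharacter (c : ι → L) (α : L → Fˣ →* ℂˣ) : parabolic F c →* ℂˣ :=
  ∏ k, (α k).comp (blockDet c k)

lemma parabolicCharacter_apply (c : ι → L) (α : L → Fˣ →* ℂˣ) (p : parabolic F c) :
    parabolicCharacter c α p = ∏ k, α k (blockDet c k p) := by
  simp [parabolicCharacter]

lemma parabolicCharacter_comp [LinearOrder R] [Fintype R] {r : ι → R} (f : R → L)
    (α : L → Fˣ →* ℂˣ) {p : GL ι F} (hf : p ∈ parabolic F (f ∘ r)) (hr : p ∈ parabolic F r) :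
    parabolicCharacter (f ∘ r) α ⟨p, hf⟩ = parabolicCharacter r (α ∘ f) ⟨p, hr⟩ := by
  have blockDet_comp (k : L) :
      blockDet (f ∘ r) k ⟨p, hf⟩ = ∏ ρ, if f ρ = k then blockDet r ρ ⟨p, hr⟩ else 1 := by
    ext
    simp only [coe_blockDet, Units.coe_prod, apply_ite Units.val, Units.val_one,
      det_toSquareBlock_comp hr]
  simp only [parabolicCharacter_apply, blockDet_comp, map_prod, Function.comp_apply]
  rw [Finset.prod_comm]
  simp [apply_ite]

/-- Both characters are computed on the blocks of the common refinement of `c` and `d`. -/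
lemma parabolicCharacter_congr {c : ι → L} {d : ι → L'} {α : L → Fˣ →* ℂˣ} {β : L' → Fˣ →* ℂˣ}
    (h : ∀ i, α (c i) = β (d i)) {p : GL ι F} (hc : p ∈ parabolic F c) (hd : p ∈ parabolic F d) :
    parabolicCharacter c α ⟨p, hc⟩ = parabolicCharacter d β ⟨p, hd⟩ := by
  let r : ι → L ×ₗ L' := fun i ↦ toLex (c i, d i)
  have hr : p ∈ parabolic F r := by
    rw [mem_parabolic] at *
    intro i j hij
    rcases Prod.Lex.toLex_lt_toLex.1 hij with hlt | ⟨-, hlt⟩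
    exacts [hc _ _ hlt, hd _ _ hlt]
  refine (parabolicCharacter_comp (r := r) (fun z ↦ (ofLex z).1) α hc hr).trans <|
    Eq.trans ?_ (parabolicCharacter_comp (r := r) (fun z ↦ (ofLex z).2) β hd hr).symm
  simp only [parabolicCharacter_apply]
  refine Finset.prod_congr rfl fun ρ _ ↦ ?_
  by_cases hρ : ρ ∈ Set.range r
  · obtain ⟨i, rfl⟩ := hρ
    exact DFunLike.congr_fun (h i) _
  · rw [blockDet_eq_one_of_notMem_range hρ, map_one, map_one]

end Parabolic

section MonomialMatrices

variable {F ι L L' : Type} [Field F] [Fintype ι] [DecidableEq ι]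

/-- The embedding of the wreath product into the general linear group, with image the monomial
matrices: `(t, w)` has the entry `t (w j)` at `(w j, j)`. -/
def monomialHom : Wreath Fˣ ι →* GL ι F :=
  MonoidHom.toHomUnits
    { toFun := fun x ↦ of fun i j ↦ if i = x.right j then (x.left i : F) else 0
      map_one' := by
        ext i j
        obtain rfl | h := eq_or_ne i j
        · simp
        · simp [h]
      map_mul' := fun x y ↦ by
        ext i j
        by_cases h : i = x.right (y.right j) <;>
          simp [h, mul_apply, wreath_mul_left_apply, Equiv.Perm.inv_def] }

lemma monomialHom_apply (x : Wreath Fˣ ι) (i j : ι) :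
    (monomialHom x).1 i j = if i = x.right j then (x.left i : F) else 0 := rfl

lemma mul_monomialHom_apply (g : GL ι F) (x : Wreath Fˣ ι) (i j : ι) :
    (g * monomialHom x).1 i j = g.1 i (x.right j) * x.left (x.right j) := by
  simp [mul_apply, monomialHom_apply]

lemma monomialHom_mul_apply (x : Wreath Fˣ ι) (g : GL ι F) (i j : ι) :
    (monomialHom x * g).1 (x.right i) j = x.left (x.right i) * g.1 i j := by
  simp [mul_apply, monomialHom_apply]

lemma monomialHom_injective : Function.Injective (monomialHom (F := F) (ι := ι)) := by
  intro x y h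
  have entry_eq (i j : ι) : (if i = x.right j then (x.left i : F) else 0) =
      if i = y.right j then (y.left i : F) else 0 := by
    rw [← monomialHom_apply, h, monomialHom_apply]
  have right_eq : x.right = y.right := by
    ext1 j
    by_contra hne
    simpa [hne] using entry_eq (x.right j) j
  refine SemidirectProduct.ext (funext fun i ↦ ?_) right_eq
  simpa [right_eq, Units.val_inj] using entry_eq i (x.right.symm i)

/-- An entry is isolated if it is the only nonzero entry both of its row and of its column. -/
def IsIsolated (A : Matrix ι ι F) (i j : ι) : Prop :=
  A i j ≠ 0 ∧ (∀ i', i' ≠ i → A i' j = 0) ∧ ∀ j', j' ≠ j → A i j' = 0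

lemma exists_monomialHom_eq {g : GL ι F} (h : ∀ j, ∃ i, IsIsolated g.1 i j) :
    ∃ x, monomialHom x = g := by
  choose w ne_zero col row using h
  have w_injective : Function.Injective w := by
    intro j j' hw
    by_contra hne
    exact ne_zero j' (hw ▸ row j j' (Ne.symm hne))
  let σ : Equiv.Perm ι := Equiv.ofBijective w (Finite.injective_iff_bijective.1 w_injective)
  have w_symm (i : ι) : w (σ.symm i) = i := σ.apply_symm_apply i
  refine ⟨⟨fun i ↦ Units.mk0 (g.1 i (σ.symm i)) ?_, σ⟩, ?_⟩
  · simpa only [w_symm] using ne_zero (σ.symm i)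
  · ext i j
    rw [monomialHom_apply]
    by_cases h : i = σ j
    · subst h
      simp
    · rw [if_neg h, col j i h]

lemma monomialHom_mem_parabolic [LinearOrder L] {c : ι → L} {x : Wreath Fˣ ι}
    (hx : x ∈ colourStabilizer Fˣ c) : monomialHom x ∈ parabolic F c := by
  rw [mem_parabolic]
  intro i j hij
  rw [monomialHom_apply, if_neg]
  rintro rfl
  exact hij.ne' (hx j)

end MonomialMatrices

section Bruhat

variable {F ι L L' : Type} [Field F] [Fintype ι] [DecidableEq ι]

/-- The shear `1 + v uᵀ`, where `u` annihilates `v`. -/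
def shear (v u : ι → F) (h : u ⬝ᵥ v = 0) : GL ι F where
  val := 1 + vecMulVec v u
  inv := 1 - vecMulVec v u
  val_inv := by
    simp [add_mul, mul_sub, vecMulVec_mul_vecMulVec, h, vecMulVec_zero]
  inv_val := by
    simp [sub_mul, mul_add, vecMulVec_mul_vecMulVec, h, vecMulVec_zero]

lemma shear_apply (v u : ι → F) (h : u ⬝ᵥ v = 0) (i j : ι) :
    (shear v u h).1 i j = (1 : Matrix ι ι F) i j + v i * u j := rfl

lemma shear_mem_parabolic [LinearOrder L] {c : ι → L} {v u : ι → F} {h : u ⬝ᵥ v = 0}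
    (hvu : ∀ i j, c j < c i → v i * u j = 0) : shear v u h ∈ parabolic F c := by
  rw [mem_parabolic]
  intro i j hij
  rw [shear_apply, one_apply_ne (by rintro rfl; exact hij.false), hvu i j hij, add_zero]

lemma shear_mul_mul_shear_apply (i j : ι) {v u : ι → F} (hv : Pi.single i 1 ⬝ᵥ v = 0)
    (hu : u ⬝ᵥ Pi.single j 1 = 0) (X : GL ι F) (a b : ι) :
    (shear v (Pi.single i 1) hv * X * shear (Pi.single j 1) u hu).1 a b =
      X.1 a b + v a * X.1 i b + (X.1 a j + v a * X.1 i j) * u b := by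
  change ((1 + vecMulVec v (Pi.single i 1)) * X.1 * (1 + vecMulVec (Pi.single j 1) u)) a b = _
  simp only [add_mul, one_mul, mul_add, mul_one, Matrix.add_apply, vecMulVec_mul, mul_vecMulVec,
    vecMulVec_apply, single_one_vecMul, mulVec_single_one, row_apply, col_apply]

/-- Gaussian elimination: row and column operations from the parabolic subgroups clear the row and
the column of the pivot `X i j`. -/
lemma exists_parabolic_pivot [LinearOrder L] [LinearOrder L'] {c : ι → L} {d : ι → L'}
    (X : GL ι F) {i j : ι} (pivot : X.1 i j ≠ 0) (hc : ∀ a, X.1 a j ≠ 0 → c a ≤ c i)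
    (hd : ∀ b, d b < d j → X.1 i b = 0) :
    ∃ p ∈ parabolic F c, ∃ q ∈ parabolic F d, (p * X * q).1 i j = X.1 i j ∧
      ∀ a b, a ≠ i ∨ b ≠ j →
        (p * X * q).1 a b = X.1 a b - X.1 a j * (X.1 i j)⁻¹ * X.1 i b := by
  let v (a : ι) : F := if a = i then 0 else -(X.1 a j * (X.1 i j)⁻¹)
  let u (b : ι) : F := if b = j then 0 else -(X.1 i b * (X.1 i j)⁻¹)
  have hv : Pi.single i 1 ⬝ᵥ v = 0 := by simp [v]
  have hu : u ⬝ᵥ Pi.single j 1 = 0 := by simp [u]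
  refine ⟨shear v (Pi.single i 1) hv, shear_mem_parabolic fun a b hab ↦ ?_,
    shear (Pi.single j 1) u hu, shear_mem_parabolic fun a b hab ↦ ?_, ?_, fun a b hab ↦ ?_⟩
  · obtain rfl | hb := eq_or_ne b i
    · have : X.1 a j = 0 := of_not_not fun h ↦ (hc a h).not_gt hab
      simp [v, this]
    · simp [hb]
  · obtain rfl | ha := eq_or_ne a j
    · simp [u, hd b hab]
    · simp [ha]
  · simp [shear_mul_mul_shear_apply, v, u]
  · rw [shear_mul_mul_shear_apply]
    by_cases ha : a = i <;> by_cases hb : b = j <;> simp_all [v, u] <;> field_simp <;> ring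

lemma exists_isIsolated_insert [LinearOrder L] [LinearOrder L'] (c : ι → L) {d : ι → L'}
    {X : GL ι F} {s : Finset ι} {j : ι} (hj : j ∉ s) (lower : ∀ b, d b < d j → b ∈ s)
    (isolated : ∀ b ∈ s, ∃ i, IsIsolated X.1 i b) :
    ∃ p ∈ parabolic F c, ∃ q ∈ parabolic F d, ∀ b ∈ insert j s,
      ∃ i, IsIsolated (p * X * q).1 i b := by
  have column_ne_zero : (Finset.univ.filter fun a ↦ X.1 a j ≠ 0).Nonempty := by
    by_contra! h
    have column_eq_zero (a : ι) : X.1 a j = 0 := by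
      simpa using Finset.filter_eq_empty_iff.1 h (Finset.mem_univ a)
    have : (X⁻¹ * X).1 j j = 0 := by
      simp only [Units.val_mul, mul_apply, column_eq_zero, mul_zero, Finset.sum_const_zero]
    simp at this
  obtain ⟨i, hi, hmax⟩ := Finset.exists_max_image _ c column_ne_zero
  simp only [Finset.mem_filter, Finset.mem_univ, true_and] at hi hmax
  have row_eq_zero (b : ι) (hb : b ∈ s) : X.1 i b = 0 := by
    obtain ⟨a, -, col, row⟩ := isolated b hb
    refine col i ?_
    rintro rfl
    exact hi (row j (by rintro rfl; exact hj hb))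
  obtain ⟨p, hp, q, hq, pivot, entry⟩ :=
    exists_parabolic_pivot X hi hmax fun b hb ↦ row_eq_zero b (lower b hb)
  refine ⟨p, hp, q, hq, fun b hmem ↦ ?_⟩
  obtain rfl | hb := Finset.mem_insert.1 hmem
  · refine ⟨i, by rwa [pivot], fun a ha ↦ ?_, fun b' hb' ↦ ?_⟩
    · rw [entry _ _ (.inl ha), inv_mul_cancel_right₀ hi, sub_self]
    · rw [entry _ _ (.inr hb'), mul_inv_cancel₀ hi, one_mul, sub_self]
  · have hbj : b ≠ j := by rintro rfl; exact hj hb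
    obtain ⟨a, ne_zero, col, row⟩ := isolated b hb
    have entry_column (a' : ι) : (p * X * q).1 a' b = X.1 a' b := by
      rw [entry _ _ (.inr hbj), row_eq_zero b hb, mul_zero, sub_zero]
    have hai : a ≠ i := by rintro rfl; exact hi (row j hbj.symm)
    refine ⟨a, by rwa [entry_column], fun a' ha' ↦ by rw [entry_column, col a' ha'],
      fun b' hb' ↦ ?_⟩
    rw [entry _ _ (.inl hai), row b' hb', row j hbj.symm, zero_mul, zero_mul, sub_zero]

lemma exists_isIsolated_of_lower [LinearOrder L] [LinearOrder L'] (c : ι → L) (d : ι → L')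
    (g : GL ι F) (s : Finset ι) (lower : ∀ a ∈ s, ∀ b, d b < d a → b ∈ s) :
    ∃ p ∈ parabolic F c, ∃ q ∈ parabolic F d, ∀ b ∈ s, ∃ i, IsIsolated (p * g * q).1 i b := by
  induction s using Finset.induction_on_max_value d with
  | empty => exact ⟨1, one_mem _, 1, one_mem _, by simp⟩
  | insert j s hj hmax ih =>
    have mem_of_lt {a b : ι} (ha : a ∈ insert j s) (hb : d b < d a) (haj : d a ≤ d j) : b ∈ s :=
      (Finset.mem_insert.1 (lower a ha b hb)).resolve_left
        (by rintro rfl; exact haj.not_gt hb)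
    obtain ⟨p, hp, q, hq, isolated⟩ :=
      ih fun a ha b hb ↦ mem_of_lt (Finset.mem_insert_of_mem ha) hb (hmax a ha)
    obtain ⟨p', hp', q', hq', isolated'⟩ := exists_isIsolated_insert c hj
      (fun b hb ↦ mem_of_lt (Finset.mem_insert_self j s) hb le_rfl) isolated
    refine ⟨p' * p, mul_mem hp' hp, q * q', mul_mem hq hq', ?_⟩
    simpa only [mul_assoc] using isolated'

lemma exists_mk_monomialHom_eq [LinearOrder L] [LinearOrder L'] (c : ι → L) (d : ι → L')
    (g : GL ι F) : ∃ x, DoubleCoset.mk (parabolic F c) (parabolic F d) (monomialHom x) =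
      DoubleCoset.mk (parabolic F c) (parabolic F d) g := by
  obtain ⟨p, hp, q, hq, isolated⟩ :=
    exists_isIsolated_of_lower c d g Finset.univ fun _ _ b _ ↦ Finset.mem_univ b
  obtain ⟨x, hx⟩ := exists_monomialHom_eq fun j ↦ isolated j (Finset.mem_univ j)
  exact ⟨x, ((DoubleCoset.eq _ _ _ _).2 ⟨p, hp, q, hq, hx⟩).symm⟩

lemma exists_perm_forall_ne_zero (g : GL ι F) : ∃ σ : Equiv.Perm ι, ∀ j, g.1 (σ j) j ≠ 0 := by
  have hdet : g.1.det ≠ 0 := ((isUnit_iff_isUnit_det _).1 g.isUnit).ne_zero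
  rw [det_apply] at hdet
  obtain ⟨σ, -, hσ⟩ := Finset.exists_ne_zero_of_sum_ne_zero hdet
  refine ⟨σ, fun j hj ↦ hσ ?_⟩
  have prod_eq_zero : ∏ i, g.1 (σ i) i = 0 := Finset.prod_eq_zero (Finset.mem_univ j) hj
  rw [prod_eq_zero, smul_zero]

lemma mk_monomialHom_eq_iff [LinearOrder L] [LinearOrder L'] {c : ι → L} {d : ι → L'}
    {x y : Wreath Fˣ ι} :
    DoubleCoset.mk (parabolic F c) (parabolic F d) (monomialHom x) =
        DoubleCoset.mk (parabolic F c) (parabolic F d) (monomialHom y) ↔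
      DoubleCoset.mk (colourStabilizer Fˣ c) (colourStabilizer Fˣ d) x =
        DoubleCoset.mk (colourStabilizer Fˣ c) (colourStabilizer Fˣ d) y := by
  constructor
  · rw [DoubleCoset.eq, mk_colourStabilizer_eq_iff]
    rintro ⟨p, hp, q, hq, h⟩
    obtain ⟨σ, hσ⟩ := exists_perm_forall_ne_zero (p * monomialHom x)
    have h' : p * monomialHom x = monomialHom y * q⁻¹ := by rw [h]; group
    have hu : σ * x.right⁻¹ ∈ colourPerms c := mem_colourPerms_of_forall_le fun i ↦ by
      have entry := hσ (x.right⁻¹ i)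
      rw [mul_monomialHom_apply] at entry
      refine not_lt.1 fun hlt ↦ left_ne_zero_of_mul entry (mem_parabolic.1 hp _ _ ?_)
      simpa [Equiv.Perm.inv_def] using hlt
    have hv : y.right⁻¹ * σ ∈ colourPerms d := mem_colourPerms_of_forall_le fun j ↦ by
      have entry := hσ j
      rw [h', show σ j = y.right ((y.right⁻¹ * σ) j) by simp [Equiv.Perm.inv_def],
        monomialHom_mul_apply] at entry
      exact not_lt.1 fun hlt ↦ right_ne_zero_of_mul entry (mem_parabolic.1 (inv_mem hq) _ _ hlt)
    exact ⟨_, hu, _, inv_mem hv, by group⟩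
  · rw [DoubleCoset.eq, DoubleCoset.eq]
    rintro ⟨p, hp, q, hq, rfl⟩
    exact ⟨_, monomialHom_mem_parabolic hp, _, monomialHom_mem_parabolic hq, by simp⟩

end Bruhat

section Comparison

variable {F ι L L' : Type} [Field F] [Fintype ι] [DecidableEq ι] [LinearOrder L] [LinearOrder L']
  {c : ι → L} {d : ι → L'} {x : Wreath Fˣ ι}

lemma blockDet_monomialHom_inl (c : ι → L) (t : ι → Fˣ) (k : L) :
    blockDet c k ⟨_, monomialHom_mem_parabolic (inl_mem_colourStabilizer c t)⟩ =
      ∏ i, if c i = k then t i else 1 := by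
  ext
  have block_eq : (monomialHom (SemidirectProduct.inl t)).1.toSquareBlock c k =
      diagonal fun i ↦ (t i.1 : F) := by
    ext i j
    obtain rfl | h := eq_or_ne i j
    · simp [toSquareBlock_def, monomialHom_apply]
    · simp [toSquareBlock_def, monomialHom_apply, h, Subtype.coe_inj]
  rw [coe_blockDet, block_eq, det_diagonal, ← Finset.prod_filter, Units.coe_prod]
  exact (Finset.prod_subtype _ (by simp) fun i ↦ (t i : F)).symm

lemma entry_eq_of_conj {p q : GL ι F} (hpq : p * monomialHom x = monomialHom x * q) (i j : ι) :
    p.1 (x.right i) (x.right j) * x.left (x.right j) = x.left (x.right i) * q.1 i j := by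
  rw [← mul_monomialHom_apply, hpq, monomialHom_mul_apply]

lemma mem_parabolic_of_conj {p q : GL ι F} (hq : q ∈ parabolic F d)
    (hpq : p * monomialHom x = monomialHom x * q) : p ∈ parabolic F (d ∘ x.right.symm) := by
  rw [mem_parabolic] at *
  intro i j hij
  have := entry_eq_of_conj hpq (x.right.symm i) (x.right.symm j)
  rw [hq _ _ hij] at this
  simpa using this

lemma blockDet_conj {p q : GL ι F} (hq : q ∈ parabolic F d)
    (hpq : p * monomialHom x = monomialHom x * q) (k : L') :
    blockDet (d ∘ x.right.symm) k ⟨p, mem_parabolic_of_conj hq hpq⟩ = blockDet d k ⟨q, hq⟩ := by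
  let e : {i // d i = k} ≃ {i // (d ∘ x.right.symm) i = k} :=
    x.right.subtypeEquiv fun i ↦ by simp
  let D : Matrix {i // d i = k} {i // d i = k} F := diagonal fun i ↦ x.left (x.right i)
  have hD : D.det ≠ 0 := by
    rw [det_diagonal]
    exact Finset.prod_ne_zero_iff.2 fun i _ ↦ Units.ne_zero _
  have block_eq : (p.1.toSquareBlock (d ∘ x.right.symm) k).submatrix e e * D =
      D * q.1.toSquareBlock d k := by
    ext i j
    rw [mul_diagonal, diagonal_mul]
    exact entry_eq_of_conj hpq i j
  have det_eq := congrArg det block_eq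
  rw [det_mul, det_mul, det_submatrix_equiv_self, mul_comm] at det_eq
  exact Units.ext (mul_left_cancel₀ hD det_eq)

variable [Fintype L] [Fintype L'] {α : L → Fˣ →* ℂˣ} {β : L' → Fˣ →* ℂˣ}

lemma parabolicCharacter_monomialHom_inl (c : ι → L) (α : L → Fˣ →* ℂˣ) (t : ι → Fˣ) :
    parabolicCharacter c α ⟨_, monomialHom_mem_parabolic (inl_mem_colourStabilizer c t)⟩ =
      ∏ i, α (c i) (t i) := by
  simp only [parabolicCharacter_apply, blockDet_monomialHom_inl, map_prod]
  rw [Finset.prod_comm]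
  simp [apply_ite]

lemma intertwines_parabolicCharacter_iff :
    Intertwines (parabolicCharacter c α) (parabolicCharacter d β) (monomialHom x) ↔
      ∀ i, α (c (x.right i)) = β (d i) := by
  constructor
  · intro h i
    ext1 a
    have := h ⟨_, monomialHom_mem_parabolic (inl_mem_colourStabilizer c _)⟩
      ⟨_, monomialHom_mem_parabolic (inl_mem_colourStabilizer d _)⟩ <| by
        simpa only [map_mul] using congrArg monomialHom (inl_mulSingle_mul x i a)
    rw [parabolicCharacter_monomialHom_inl, parabolicCharacter_monomialHom_inl] at this
    simpa [Pi.mulSingle_apply, apply_ite] using this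
  · rintro h ⟨p, hp⟩ ⟨q, hq⟩ hpq
    have character_conj :
        parabolicCharacter (d ∘ x.right.symm) β ⟨p, mem_parabolic_of_conj hq hpq⟩ =
          parabolicCharacter d β ⟨q, hq⟩ := by
      simp only [parabolicCharacter_apply, blockDet_conj hq hpq]
    rw [← character_conj]
    exact parabolicCharacter_congr (fun i ↦ by simpa using h (x.right.symm i)) hp _

theorem sum_multiplicity_parabolicCharacter_eq [Fintype F] (c : ι → L) (d : ι → L')
    (α : L → Fˣ →* ℂˣ) (β : L' → Fˣ →* ℂˣ) :
    ∑ χ : Irr (GL ι F), multiplicity _ (parabolicCharacter c α) χ *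
        multiplicity _ (parabolicCharacter d β) χ =
      ∑ ψ : Irr (Wreath Fˣ ι), multiplicity _ (colourCharacter c α 1) ψ *
        multiplicity _ (colourCharacter d β 1) ψ := by
  have ncard_eq :
      (intertwiningDoubleCosets (parabolicCharacter c α) (parabolicCharacter d β)).ncard =
        (intertwiningDoubleCosets (colourCharacter c α 1) (colourCharacter d β 1)).ncard :=
    ncard_intertwiningDoubleCosets_congr monomialHom (exists_mk_monomialHom_eq c d)
      (fun _ _ ↦ mk_monomialHom_eq_iff) fun _ ↦ by
        rw [intertwines_parabolicCharacter_iff, intertwines_colourCharacter_one_iff]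
  rw [sum_multiplicity_mul_eq_ncard, sum_multiplicity_mul_eq_ncard, ncard_eq]

end Comparison

section DualGroup

variable {K : Type} [CommGroup K] [Finite K]

instance instFiniteDual : Finite (K →* ℂˣ) := by
  have : NeZero (Monoid.exponent K) := ⟨Monoid.exponent_ne_zero_of_finite⟩
  obtain ⟨e⟩ := CommGroup.monoidHom_mulEquiv_of_hasEnoughRootsOfUnity K ℂ
  exact Finite.of_equiv _ e.symm.toEquiv

instance instFintypeDual : Fintype (K →* ℂˣ) := Fintype.ofFinite _

lemma sum_dual_apply (t : K) :
    ∑ θ : K →* ℂˣ, (θ t : ℂ) = if t = 1 then (Nat.card K : ℂ) else 0 := by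
  have : NeZero (Monoid.exponent K) := ⟨Monoid.exponent_ne_zero_of_finite⟩
  have eval_eq_one_iff : (Units.coeHom ℂ).comp (MonoidHom.eval (M := K) (N := ℂˣ) t) = 1 ↔
      t = 1 := by
    refine ⟨fun h ↦ ?_, fun h ↦ by ext; simp [h]⟩
    by_contra ht
    obtain ⟨θ, hθ⟩ := CommGroup.exists_apply_ne_one_of_hasEnoughRootsOfUnity K ℂ ht
    exact hθ (Units.ext (DFunLike.congr_fun h θ))
  have := sum_hom_units ((Units.coeHom ℂ).comp (MonoidHom.eval (M := K) (N := ℂˣ) t))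
  simp only [eval_eq_one_iff, ← Nat.card_eq_fintype_card,
    CommGroup.card_monoidHom_of_hasEnoughRootsOfUnity K ℂ, Nat.cast_ite, Nat.cast_zero] at this
  exact this

variable {ι : Type} [Fintype ι] [DecidableEq ι]

lemma sum_prod_dual_apply (t : ι → K) :
    ∑ θ : ι → K →* ℂˣ, ∏ i, (θ i (t i) : ℂ) =
      if t = 1 then (Nat.card (ι → K) : ℂ) else 0 := by
  rw [← Fintype.prod_sum fun i (θ : K →* ℂˣ) ↦ (θ (t i) : ℂ)]
  simp only [sum_dual_apply]
  split_ifs with h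
  · simp [h, Nat.card_fun]
  · obtain ⟨i, hi⟩ := Function.ne_iff.1 h
    exact Finset.prod_eq_zero (Finset.mem_univ i) (if_neg hi)

lemma sum_multiplicity_eq_multiplicity_ker {G : Type} [Group G] [Fintype G] (P : Subgroup G)
    {δ : P →* ι → K} (hδ : Function.Surjective δ) {l : (ι → K →* ℂˣ) → P →* ℂˣ}
    (hl : ∀ θ p, l θ p = ∏ i, θ i (δ p i)) (f : G → ℂ) :
    ∑ θ, multiplicity P (l θ) f = multiplicity (δ.ker.map P.subtype) 1 f := by
  let e := δ.ker.equivMapOfInjective P.subtype P.subtype_injective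
  have card_eq : Nat.card P = Nat.card (ι → K) * Nat.card δ.ker := by
    rw [δ.ker.card_eq_card_quotient_mul_card_subgroup,
      Nat.card_congr (QuotientGroup.quotientKerEquivOfSurjective δ hδ).toEquiv]
  have sum_ker : ∑ p : P, f p * (if δ p⁻¹ = 1 then (Nat.card (ι → K) : ℂ) else 0) =
      Nat.card (ι → K) * ∑ p : δ.ker, f p := by
    simp only [map_inv, inv_eq_one, mul_ite, mul_zero]
    rw [← Finset.sum_filter, ← Finset.sum_mul, mul_comm]
    congr 1
    exact Finset.sum_subtype _ (by simp [MonoidHom.mem_ker]) fun p : P ↦ f p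
  simp only [multiplicity_apply _ (l _), ← Finset.mul_sum]
  rw [Finset.sum_comm]
  simp only [← Finset.mul_sum, hl, Units.coe_prod, sum_prod_dual_apply]
  rw [sum_ker, multiplicity_one_apply, ← Equiv.sum_comp e.toEquiv, ← Nat.card_congr e.toEquiv,
    card_eq, Nat.cast_mul, mul_inv, mul_assoc, mul_left_comm (Nat.card δ.ker : ℂ)⁻¹,
    inv_mul_cancel_left₀ (Nat.cast_ne_zero.2 Nat.card_pos.ne')]
  simp [e]

theorem sum_multiplicity_colourCharacter_id (f : Wreath K ι → ℂ) :
    ∑ θ : ι → K →* ℂˣ, multiplicity _ (colourCharacter id θ 1) f = f 1 := by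
  have right_eq_one (x : colourStabilizer K (id : ι → ι)) : x.1.right = 1 := Equiv.ext x.2
  let δ : colourStabilizer K (id : ι → ι) →* ι → K :=
    { toFun := fun x ↦ x.1.left
      map_one' := rfl
      map_mul' := fun x y ↦ by
        ext i
        simp [wreath_mul_left_apply, right_eq_one x] }
  have δ_surjective : Function.Surjective δ := fun t ↦ ⟨⟨_, inl_mem_colourStabilizer id t⟩, rfl⟩
  have ker_eq_bot : δ.ker.map (Subgroup.subtype _) = ⊥ := by
    rw [Subgroup.map_eq_bot_iff_of_injective _ (Subgroup.subtype_injective _), eq_bot_iff]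
    exact fun x hx ↦ Subtype.ext (SemidirectProduct.ext hx (right_eq_one x))
  rw [sum_multiplicity_eq_multiplicity_ker _ δ_surjective (l := fun θ ↦ colourCharacter id θ 1)
    (fun θ x ↦ by rw [colourCharacter_apply, MonoidHom.one_apply, mul_one]; rfl), ker_eq_bot,
    multiplicity_one_of_subsingleton]

end DualGroup

section CosetAverages

variable {G A : Type} [Group G] [Fintype G] [Group A]

/-- The average of `f` over the left coset `a H`. -/
def cosetAverage (H : Subgroup G) (f : G → ℂ) (a : G) : ℂ :=
  (Nat.card H : ℂ)⁻¹ * ∑ u : H, f (a * u)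

lemma cosetAverage_one (H : Subgroup G) (f : G → ℂ) :
    cosetAverage H f 1 = multiplicity H 1 f := by
  simp [cosetAverage, multiplicity_one_apply]

/-- The hypothesis says that `a H` is conjugate to every coset `a x H` in `a H'`. -/
lemma cosetAverage_eq_of_le {H H' : Subgroup G} (hH : H ≤ H') {a : G}
    (ha : ∀ x ∈ H', ∃ s ∈ Subgroup.normalizer (H : Set G), x⁻¹ * (a⁻¹ * s * a * s⁻¹) ∈ H)
    {f : G → ℂ} (hf : IsClassFunction f) : cosetAverage H' f a = cosetAverage H f a := by
  have inner_eq (x : H') : ∑ u : H, f (a * (x * u)) = ∑ u : H, f (a * u) := by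
    obtain ⟨s, hs, hxs⟩ := ha x x.2
    let e : H ≃ H :=
      ((MulAut.conj s).toEquiv.subtypeEquiv fun u ↦ hs u).trans (Equiv.mulLeft ⟨_, hxs⟩)
    rw [← Equiv.sum_comp e]
    refine Finset.sum_congr rfl fun u _ ↦ ?_
    rw [← hf (a * u) s]
    congr 1
    change a * ((x : G) * ((x : G)⁻¹ * (a⁻¹ * s * a * s⁻¹) * (s * u * s⁻¹))) = _
    group
  have outer_eq (u : H) : ∑ x : H', f (a * (x * u)) = ∑ x : H', f (a * x) :=
    Equiv.sum_comp (Equiv.mulRight (⟨u, hH u.2⟩ : H')) fun x : H' ↦ f (a * x)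
  have double_sum := Finset.sum_comm (s := Finset.univ) (t := Finset.univ)
    (f := fun (x : H') (u : H) ↦ f (a * (x * u)))
  simp only [inner_eq, outer_eq, Finset.sum_const, Finset.card_univ, nsmul_eq_mul,
    ← Nat.card_eq_fintype_card] at double_sum
  have card_ne_zero : (Nat.card H : ℂ) ≠ 0 := by simp
  have card_ne_zero' : (Nat.card H' : ℂ) ≠ 0 := by simp
  rw [cosetAverage, cosetAverage]
  field_simp
  rw [mul_comm, ← double_sum]

lemma card_mul_multiplicity_range_sup [Fintype A] {H : Subgroup G} {τ : A →* G}
    (hτ : τ.range ≤ Subgroup.normalizer (H : Set G)) (hdisj : ∀ a, τ a ∈ H → a = 1)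
    (f : G → ℂ) :
    Nat.card A * multiplicity (τ.range ⊔ H) 1 f = ∑ a, cosetAverage H f (τ a) := by
  let e (r : A × H) : (τ.range ⊔ H : Subgroup G) :=
    ⟨τ r.1 * r.2, Subgroup.mul_mem_sup ⟨r.1, rfl⟩ r.2.2⟩
  have e_bijective : Function.Bijective e := by
    constructor
    · rintro ⟨a, u⟩ ⟨b, v⟩ h
      replace h : τ a * u = τ b * v := congrArg Subtype.val h
      obtain rfl : b = a := by
        rw [← inv_mul_eq_one]
        apply hdisj
        rw [map_mul, map_inv, eq_mul_inv_of_mul_eq h, ← mul_assoc, inv_mul_cancel_left]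
        exact H.mul_mem v.2 (H.inv_mem u.2)
      rw [Subtype.ext (mul_left_cancel h)]
    · rintro ⟨p, hp⟩
      rw [← SetLike.mem_coe, Subgroup.coe_mul_of_left_le_normalizer_right _ _ hτ] at hp
      obtain ⟨_, ⟨a, rfl⟩, u, hu, rfl⟩ := hp
      exact ⟨(a, ⟨u, hu⟩), rfl⟩
  have card_eq : Nat.card (τ.range ⊔ H : Subgroup G) = Nat.card A * Nat.card H := by
    rw [← Nat.card_prod, Nat.card_congr (Equiv.ofBijective e e_bijective)]
  have sum_eq : ∑ p : (τ.range ⊔ H : Subgroup G), f p = ∑ a, ∑ u : H, f (τ a * u) := by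
    rw [← Fintype.sum_prod_type', ← e_bijective.sum_comp fun p ↦ f p]
  simp only [cosetAverage, ← Finset.mul_sum]
  rw [multiplicity_one_apply, sum_eq, card_eq, Nat.cast_mul, mul_inv, mul_assoc,
    mul_inv_cancel_left₀ (by simp)]

/-- For `a ≠ 1` the averages of `χ` over `τ a H` and `τ a H'` agree, and the averages over all `a`
are the multiplicities for `τ(A) H` and `τ(A) H'`, which are integers. -/
lemma exists_int_multiplicity_sub_eq [Finite A] {H H' : Subgroup G} (hH : H ≤ H') {τ : A →* G}
    (hτ : τ.range ≤ Subgroup.normalizer (H : Set G))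
    (hτ' : τ.range ≤ Subgroup.normalizer (H' : Set G)) (hdisj : ∀ a, τ a ∈ H' → a = 1)
    (hconj : ∀ a ≠ 1, ∀ x ∈ H', ∃ s ∈ Subgroup.normalizer (H : Set G),
      x⁻¹ * ((τ a)⁻¹ * s * τ a * s⁻¹) ∈ H)
    {χ : G → ℂ} (hχ : χ ∈ Irr G) :
    ∃ z : ℤ, multiplicity H 1 χ - multiplicity H' 1 χ = Nat.card A * z := by
  have := Fintype.ofFinite A
  obtain ⟨k, hk⟩ := exists_nat_eq_multiplicity (τ.range ⊔ H) 1 hχ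
  obtain ⟨k', hk'⟩ := exists_nat_eq_multiplicity (τ.range ⊔ H') 1 hχ
  refine ⟨k - k', ?_⟩
  have sum_sub (g : A → ℂ) (g' : A → ℂ) (h : ∀ a ≠ 1, g' a = g a) :
      g 1 - g' 1 = ∑ a, g a - ∑ a, g' a := by
    rw [← Finset.sum_sub_distrib, Fintype.sum_eq_single 1 fun a ha ↦ by rw [h a ha, sub_self]]
  have := sum_sub (fun a ↦ cosetAverage H χ (τ a)) (fun a ↦ cosetAverage H' χ (τ a)) fun a ha ↦
    cosetAverage_eq_of_le hH (hconj a ha) (isClassFunction_of_mem_irr hχ)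
  simp only [map_one, cosetAverage_one] at this
  rw [this, ← card_mul_multiplicity_range_sup hτ fun a ha ↦ hdisj a (hH ha),
    ← card_mul_multiplicity_range_sup hτ' hdisj, hk, hk']
  push_cast
  ring

end CosetAverages

section Unitriangular

variable {F : Type} [Field F]

lemma inv_mulVec_eq {ι : Type} [Fintype ι] [DecidableEq ι] {g : GL ι F} {u v : ι → F}
    (h : g.1 *ᵥ u = v) : (g⁻¹).1 *ᵥ v = u := by
  rw [← h, mulVec_mulVec, ← Units.val_mul, inv_mul_cancel, Units.val_one, one_mulVec]

lemma shear_mulVec {ι : Type} [Fintype ι] [DecidableEq ι] (v u : ι → F) (h : u ⬝ᵥ v = 0)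
    (x : ι → F) : (shear v u h).1 *ᵥ x = x + (u ⬝ᵥ x) • v := by
  change (1 + vecMulVec v u) *ᵥ x = _
  rw [add_mulVec, one_mulVec, vecMulVec_mulVec, op_smul_eq_smul]

lemma monomialHom_inl_mulVec {ι : Type} [Fintype ι] [DecidableEq ι] (t : ι → Fˣ) (x : ι → F) :
    (monomialHom (SemidirectProduct.inl t)).1 *ᵥ x = fun i ↦ (t i : F) * x i := by
  ext i
  rw [mulVec, dotProduct, Fintype.sum_eq_single i fun j hij ↦ by
    simp [monomialHom_apply, hij.symm]]
  simp [monomialHom_apply]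

variable {n : ℕ}

/-- The diagonal of an upper triangular matrix, as a homomorphism. -/
def diagonalHom : parabolic F (id : Fin n → Fin n) →* Fin n → Fˣ :=
  MonoidHom.pi (blockDet id)

lemma coe_diagonalHom (p : parabolic F (id : Fin n → Fin n)) (i : Fin n) :
    (diagonalHom p i : F) = p.1.1 i i :=
  det_toSquareBlock_id p.1.1 i

lemma diagonalHom_monomialHom_inl (t : Fin n → Fˣ) :
    diagonalHom ⟨_, monomialHom_mem_parabolic (inl_mem_colourStabilizer id t)⟩ = t := by
  ext i
  simp [coe_diagonalHom, monomialHom_apply]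

variable (F n) in
/-- The group of upper triangular matrices with ones on the diagonal. -/
def unitriangular : Subgroup (GL (Fin n) F) :=
  diagonalHom.ker.map (Subgroup.subtype _)

lemma mem_unitriangular {g : GL (Fin n) F} :
    g ∈ unitriangular F n ↔ (∀ i j, j < i → g.1 i j = 0) ∧ ∀ i, g.1 i i = 1 := by
  rw [unitriangular, Subgroup.mem_map]
  constructor
  · rintro ⟨p, hp, rfl⟩
    refine ⟨mem_parabolic.1 p.2, fun i ↦ ?_⟩
    rw [← Units.val_one, ← Pi.one_apply (M := fun _ ↦ Fˣ) i, ← MonoidHom.mem_ker.1 hp,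
      coe_diagonalHom]
    rfl
  · rintro ⟨upper, diag⟩
    refine ⟨⟨g, mem_parabolic.2 upper⟩, MonoidHom.mem_ker.2 ?_, rfl⟩
    ext i
    rw [coe_diagonalHom]
    exact diag i

lemma shear_mem_unitriangular {v u : Fin n → F} {h : u ⬝ᵥ v = 0}
    (hvu : ∀ i j, j ≤ i → v i * u j = 0) : shear v u h ∈ unitriangular F n := by
  refine mem_unitriangular.2 ⟨fun i j hij ↦ ?_, fun i ↦ ?_⟩
  · rw [shear_apply, hvu i j hij.le, one_apply_ne hij.ne', add_zero]
  · rw [shear_apply, hvu i i le_rfl, one_apply_eq, add_zero]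

theorem sum_multiplicity_parabolicCharacter_id [Fintype F] (f : GL (Fin n) F → ℂ) :
    ∑ θ : Fin n → Fˣ →* ℂˣ, multiplicity _ (parabolicCharacter id θ) f =
      multiplicity (unitriangular F n) 1 f := by
  have diagonalHom_surjective : Function.Surjective (diagonalHom (F := F) (n := n)) :=
    fun t ↦ ⟨_, diagonalHom_monomialHom_inl t⟩
  exact sum_multiplicity_eq_multiplicity_ker _ diagonalHom_surjective
    (l := fun θ ↦ parabolicCharacter id θ) (fun θ p ↦ parabolicCharacter_apply id θ p) f

/-- The unitriangular matrices which fix the first `m` vectors of the standard basis. -/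
def unitriangularFixing (F : Type) [Field F] (n m : ℕ) : Subgroup (GL (Fin n) F) :=
  unitriangular F n ⊓
    { carrier := {g | ∀ j : Fin n, j.1 < m → g.1 *ᵥ Pi.single j 1 = Pi.single j 1}
      one_mem' := fun j _ ↦ one_mulVec _
      mul_mem' := fun {g h} hg hh j hj ↦ by
        rw [Units.val_mul, ← mulVec_mulVec, hh j hj, hg j hj]
      inv_mem' := fun {g} hg j hj ↦ inv_mulVec_eq (hg j hj) }

lemma mem_unitriangularFixing {m : ℕ} {g : GL (Fin n) F} :
    g ∈ unitriangularFixing F n m ↔ g ∈ unitriangular F n ∧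
      ∀ j : Fin n, j.1 < m → g.1 *ᵥ Pi.single j 1 = Pi.single j 1 := Iff.rfl

lemma unitriangularFixing_zero : unitriangularFixing F n 0 = unitriangular F n :=
  inf_eq_left.2 fun _ _ _ h ↦ absurd h (Nat.not_lt_zero _)

lemma unitriangularFixing_self : unitriangularFixing F n n = ⊥ := by
  rw [eq_bot_iff]
  intro g hg
  ext i j
  simpa [mulVec_single_one, one_apply, Pi.single_apply] using congrFun (hg.2 j j.2) i

lemma mulVec_eq_self_of_mem_unitriangularFixing {m : ℕ} {g : GL (Fin n) F}
    (hg : g ∈ unitriangularFixing F n m) {v : Fin n → F} (hv : ∀ i : Fin n, m ≤ i.1 → v i = 0) :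
    g.1 *ᵥ v = v := by
  conv_rhs => rw [← one_mulVec v]
  ext i
  simp only [mulVec, dotProduct]
  refine Finset.sum_congr rfl fun j _ ↦ ?_
  obtain hj | hj := le_or_gt m j.1
  · rw [hv j hj, mul_zero, mul_zero]
  · have := congrFun (hg.2 j hj) i
    rw [mulVec_single_one, col_apply] at this
    rw [this, Pi.single_apply, one_apply]

lemma conj_mem_unitriangularFixing {m : ℕ} {b u : GL (Fin n) F}
    (hb : b ∈ parabolic F (id : Fin n → Fin n)) (hu : u ∈ unitriangularFixing F n m) :
    b * u * b⁻¹ ∈ unitriangularFixing F n m := by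
  refine mem_unitriangularFixing.2 ⟨?_, fun j hj ↦ ?_⟩
  · obtain ⟨p, hp, rfl⟩ := hu.1
    exact ⟨_, diagonalHom.normal_ker.conj_mem p hp ⟨b, hb⟩, rfl⟩
  · have inv_single (i : Fin n) (hi : m ≤ i.1) : ((b⁻¹).1 *ᵥ Pi.single j 1) i = 0 := by
      rw [mulVec_single_one, col_apply]
      exact mem_parabolic.1 (Subgroup.inv_mem _ hb) i j (hj.trans_le hi)
    rw [mul_assoc, Units.val_mul, Units.val_mul, ← mulVec_mulVec, ← mulVec_mulVec,
      mulVec_eq_self_of_mem_unitriangularFixing hu inv_single, mulVec_mulVec, ← Units.val_mul,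
      mul_inv_cancel, Units.val_one, one_mulVec]

lemma parabolic_le_normalizer_unitriangularFixing (m : ℕ) :
    parabolic F (id : Fin n → Fin n) ≤
      Subgroup.normalizer (unitriangularFixing F n m : Set (GL (Fin n) F)) := by
  refine fun b hb u ↦ ⟨conj_mem_unitriangularFixing hb, fun h ↦ ?_⟩
  simpa [mul_assoc] using conj_mem_unitriangularFixing (Subgroup.inv_mem _ hb) h

/-- The torus of diagonal matrices with ones outside the position `k`. -/
def diagonalTorus (k : Fin n) : Fˣ →* GL (Fin n) F :=
  monomialHom.comp (SemidirectProduct.inl.comp (MonoidHom.mulSingle (fun _ ↦ Fˣ) k))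

lemma diagonalTorus_mulVec (k : Fin n) (z : Fˣ) (v : Fin n → F) :
    (diagonalTorus k z).1 *ᵥ v = v + Pi.single k ((z - 1) * v k) := by
  rw [diagonalTorus, MonoidHom.comp_apply, MonoidHom.comp_apply, monomialHom_inl_mulVec]
  ext i
  obtain rfl | hi := eq_or_ne i k
  · simp [sub_mul]
  · simp [hi]

lemma diagonalTorus_range_le (k : Fin n) :
    (diagonalTorus k).range ≤ parabolic F (id : Fin n → Fin n) := by
  rintro _ ⟨z, rfl⟩
  exact monomialHom_mem_parabolic (inl_mem_colourStabilizer id _)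

lemma eq_one_of_diagonalTorus_mem {k : Fin n} {z : Fˣ}
    (h : diagonalTorus k z ∈ unitriangular F n) : z = 1 := by
  have := (mem_unitriangular.1 h).2 k
  rw [← col_apply (diagonalTorus k z).1, ← mulVec_single_one, diagonalTorus_mulVec] at this
  exact Units.ext (by simpa using this)

lemma commutator_diagonalTorus_shear {k : Fin n} (z : Fˣ) {v : Fin n → F}
    (h : Pi.single k 1 ⬝ᵥ v = 0) :
    (diagonalTorus k z)⁻¹ * shear v (Pi.single k 1) h * diagonalTorus k z *
        (shear v (Pi.single k 1) h)⁻¹ =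
      shear ((z - 1 : F) • v) (Pi.single k 1) (by rw [dotProduct_smul, h, smul_zero]) := by
  have hvk : v k = 0 := by simpa using h
  rw [mul_inv_eq_iff_eq_mul, mul_assoc, inv_mul_eq_iff_eq_mul]
  refine Units.ext (ext_of_mulVec_single fun j ↦ ?_)
  simp only [Units.val_mul, ← mulVec_mulVec, shear_mulVec, diagonalTorus_mulVec,
    single_one_dotProduct]
  ext i
  obtain rfl | hi := eq_or_ne i k
  · simp [hvk]
  · simp [hi, hvk]
    ring

lemma exists_shear_of_mem_unitriangularFixing {k : Fin n} {z : Fˣ} (hz : z ≠ 1)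
    {x : GL (Fin n) F} (hx : x ∈ unitriangularFixing F n k) :
    ∃ s ∈ unitriangular F n, x⁻¹ * ((diagonalTorus k z)⁻¹ * s * diagonalTorus k z * s⁻¹) ∈
      unitriangularFixing F n (k + 1) := by
  have hz' : (z - 1 : F) ≠ 0 := sub_ne_zero.2 (Units.val_eq_one.not.2 hz)
  let v : Fin n → F := x.1 *ᵥ Pi.single k 1 - Pi.single k 1
  have hv (i : Fin n) (hi : k ≤ i) : v i = 0 := by
    obtain rfl | hi := hi.eq_or_lt
    · simp [v, (mem_unitriangular.1 hx.1).2]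
    · simp [v, (mem_unitriangular.1 hx.1).1 _ _ hi, hi.ne']
  have hvk : Pi.single k 1 ⬝ᵥ v = 0 := by simpa using hv k le_rfl
  have upper (i j : Fin n) (hij : j ≤ i) : v i * (Pi.single k 1 : Fin n → F) j = 0 := by
    obtain rfl | hj := eq_or_ne j k
    · rw [hv i hij, zero_mul]
    · rw [Pi.single_eq_of_ne hj, mul_zero]
  have hwk : Pi.single k 1 ⬝ᵥ ((z - 1 : F)⁻¹ • v) = 0 := by rw [dotProduct_smul, hvk, smul_zero]
  refine ⟨shear ((z - 1 : F)⁻¹ • v) (Pi.single k 1) hwk, shear_mem_unitriangular fun i j hij ↦ by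
    rw [Pi.smul_apply, smul_eq_mul, mul_assoc, upper i j hij, mul_zero], ?_⟩
  simp only [commutator_diagonalTorus_shear, smul_inv_smul₀ hz']
  refine mem_unitriangularFixing.2 ⟨Subgroup.mul_mem _ (Subgroup.inv_mem _ hx.1)
    (shear_mem_unitriangular upper), fun j hj ↦ ?_⟩
  rw [Units.val_mul, ← mulVec_mulVec]
  apply inv_mulVec_eq
  rw [shear_mulVec]
  obtain rfl | hjk := eq_or_ne j k
  · simp [v]
  · rw [hx.2 j (by have := Fin.val_ne_of_ne hjk; omega)]
    simp [hjk]

lemma exists_int_multiplicity_unitriangularFixing_sub_eq [Fintype F] {χ : GL (Fin n) F → ℂ}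
    (hχ : χ ∈ Irr (GL (Fin n) F)) {m : ℕ} (hm : m ≤ n) :
    ∃ z : ℤ, multiplicity (unitriangularFixing F n m) 1 χ -
      multiplicity (unitriangular F n) 1 χ = Nat.card Fˣ * z := by
  induction m with
  | zero => exact ⟨0, by rw [unitriangularFixing_zero]; simp⟩
  | succ m ih =>
    obtain ⟨z, hz⟩ := ih (Nat.le_of_succ_le hm)
    let k : Fin n := ⟨m, hm⟩
    have normalizes (m : ℕ) :=
      (diagonalTorus_range_le k).trans (parabolic_le_normalizer_unitriangularFixing (F := F) m)
    have le : unitriangularFixing F n (m + 1) ≤ unitriangularFixing F n m :=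
      fun g hg ↦ ⟨hg.1, fun j hj ↦ hg.2 j (hj.trans m.lt_succ_self)⟩
    obtain ⟨z', hz'⟩ := exists_int_multiplicity_sub_eq le (normalizes _) (normalizes m)
      (fun z hz ↦ eq_one_of_diagonalTorus_mem hz.1) (fun z hz x hx ↦
        have ⟨s, hs, hxs⟩ := exists_shear_of_mem_unitriangularFixing (k := k) hz hx
        ⟨s, parabolic_le_normalizer_unitriangularFixing _
          (mem_parabolic.2 (mem_unitriangular.1 hs).1), hxs⟩) hχ
    exact ⟨z + z', by push_cast; linear_combination hz + hz'⟩

theorem exists_int_degree_sub_multiplicity_unitriangular_eq [Fintype F] {χ : GL (Fin n) F → ℂ}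
    (hχ : χ ∈ Irr (GL (Fin n) F)) :
    ∃ z : ℤ, χ 1 - multiplicity (unitriangular F n) 1 χ = Nat.card Fˣ * z := by
  obtain ⟨z, hz⟩ := exists_int_multiplicity_unitriangularFixing_sub_eq hχ le_rfl
  rw [unitriangularFixing_self, multiplicity_one_of_subsingleton] at hz
  exact ⟨z, hz⟩

end Unitriangular

section Levels

open Finset

variable {ι L O A : Type*}

/-- The number of elements of colour `k`. -/
def colourSize [Fintype ι] (c : ι → L) (k : L) : ℕ := #{i | c i = k}

/-- A standard level function numbers each colour class `C` bijectively by `0, …, #C - 1`. -/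
structure IsStandardLevel [Fintype ι] (c : ι → L) (l : ι → ℕ) : Prop where
  eq_of_eq : ∀ i j, c i = c j → l i = l j → i = j
  lt_colourSize : ∀ i, l i < colourSize c (c i)

/-- The rank of `i` inside its colour class, ordered by the values of `g`. -/
def colourRank [Fintype ι] [LinearOrder O] (c : ι → L) (g : ι → O) (i : ι) : ℕ :=
  #{j | c j = c i ∧ g j < g i}

section Rank

variable [Fintype ι] {c : ι → L}

lemma colourSize_comp_perm (c : ι → L) (w : Equiv.Perm ι) (k : L) :
    colourSize (c ∘ w) k = colourSize c k :=
  card_bij (fun i _ ↦ w i) (by simp) (fun _ _ _ _ h ↦ w.injective h)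
    fun i hi ↦ ⟨w.symm i, by simpa using hi, w.apply_symm_apply i⟩

lemma sum_colourSize_comp_perm (c : ι → L) (w : Equiv.Perm ι) :
    ∑ i, colourSize (c ∘ w) (c (w i)) = ∑ i, colourSize c (c i) := by
  simp only [colourSize_comp_perm]
  exact Equiv.sum_comp w fun i ↦ colourSize c (c i)

lemma colourRank_lt_colourSize [LinearOrder O] (c : ι → L) (g : ι → O) (i : ι) :
    colourRank c g i < colourSize c (c i) := by
  refine card_lt_card ((ssubset_iff_of_subset ?_).2 ⟨i, by simp, by simp⟩)
  exact monotone_filter_right _ fun _ _ h ↦ h.1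

lemma colourRank_lt_colourRank [LinearOrder O] {g : ι → O} {i j : ι} (hc : c i = c j)
    (hg : g i < g j) : colourRank c g i < colourRank c g j := by
  refine card_lt_card ((ssubset_iff_of_subset ?_).2 ⟨i, by simp [hc, hg], by simp⟩)
  exact monotone_filter_right _ fun _ _ h ↦ ⟨h.1.trans hc, h.2.trans hg⟩

section Injective

variable [LinearOrder O] {g : ι → O} (hg : ∀ i j, c i = c j → g i = g j → i = j)

include hg

lemma isStandardLevel_colourRank : IsStandardLevel c (colourRank c g) where
  eq_of_eq i j hc hl := by
    obtain h | h | h := lt_trichotomy (g i) (g j)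
    · exact absurd hl (colourRank_lt_colourRank hc h).ne
    · exact hg i j hc h
    · exact absurd hl (colourRank_lt_colourRank hc.symm h).ne'
  lt_colourSize := colourRank_lt_colourSize c g

lemma colourSize_eq_add_card_add_one (i : ι) :
    colourSize c (c i) = colourRank c g i + #{j | c i = c j ∧ g i < g j} + 1 := by
  have card_singleton : #{j | j = i} = 1 := by
    rw [filter_eq' univ i, if_pos (mem_univ i), Finset.card_singleton]
  rw [← card_singleton]
  simp only [colourSize, colourRank, card_filter, ← sum_add_distrib]
  refine sum_congr rfl fun j _ ↦ ?_
  have := hg j i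
  have := lt_trichotomy (g j) (g i)
  grind

lemma two_mul_sum_colourRank_add_card :
    2 * ∑ i, colourRank c g i + Fintype.card ι = ∑ i, colourSize c (c i) := by
  have swap : ∑ i, #{j | c i = c j ∧ g i < g j} = ∑ i, colourRank c g i := by
    simp only [colourRank, card_filter]
    rw [sum_comm]
  simp only [colourSize_eq_add_card_add_one hg, sum_add_distrib, swap, sum_const, card_univ,
    smul_eq_mul, mul_one, two_mul]

end Injective

lemma colourRank_le {l : ι → ℕ} (hl : ∀ i j, c i = c j → l i = l j → i = j) (i : ι) :
    colourRank c l i ≤ l i := by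
  rw [← card_range (l i)]
  refine card_le_card_of_injOn l (fun j hj ↦ ?_) fun j hj k hk ↦ ?_
  · simpa using (mem_filter.1 hj).2.2
  · exact hl j k ((mem_filter.1 hj).2.1.trans (mem_filter.1 hk).2.1.symm)

end Rank

section Level

variable [Fintype ι] [LinearOrder ι] {c : ι → L}

/-- The standard level function of a colouring of a linearly ordered set. -/
def level (c : ι → L) : ι → ℕ := colourRank c id

lemma isStandardLevel_level (c : ι → L) : IsStandardLevel c (level c) :=
  isStandardLevel_colourRank fun _ _ _ h ↦ h

lemma sum_colourRank_comp_perm_eq {w : Equiv.Perm ι} {l : ι → ℕ}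
    (h : ∀ i j, c (w i) = c (w j) → l i = l j → i = j) :
    ∑ i, colourRank (c ∘ w) l i = ∑ i, level c i := by
  have rank_sum := two_mul_sum_colourRank_add_card (c := c ∘ w) h
  have level_sum : 2 * ∑ i, level c i + Fintype.card ι = ∑ i, colourSize c (c i) :=
    two_mul_sum_colourRank_add_card fun _ _ _ h ↦ h
  have := sum_colourSize_comp_perm c w
  simp only [Function.comp_apply] at rank_sum
  lia

lemma sum_level_le {w : Equiv.Perm ι} {l : ι → ℕ}
    (h : ∀ i j, c (w i) = c (w j) → l i = l j → i = j) : ∑ i, level c i ≤ ∑ i, l i := by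
  rw [← sum_colourRank_comp_perm_eq h]
  exact sum_le_sum fun i _ ↦ colourRank_le h i

lemma isStandardLevel_of_sum_level_eq {w : Equiv.Perm ι} {l : ι → ℕ}
    (h : ∀ i j, c (w i) = c (w j) → l i = l j → i = j) (hsum : ∑ i, level c i = ∑ i, l i) :
    IsStandardLevel (c ∘ w) l := by
  rw [← sum_colourRank_comp_perm_eq h,
    sum_eq_sum_iff_of_le fun i _ ↦ colourRank_le (c := c ∘ w) h i] at hsum
  have : colourRank (c ∘ w) l = l := funext fun i ↦ hsum i (mem_univ i)
  exact this ▸ isStandardLevel_colourRank h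

end Level

section Matching

lemma exists_equiv_comp_eq {X Y Z : Type*} [Finite X] [Finite Y] {f : X → Z} {g : Y → Z}
    (h : ∀ z, {x | f x = z}.ncard = {y | g y = z}.ncard) : ∃ e : X ≃ Y, ∀ x, g (e x) = f x :=
  ⟨Equiv.ofFiberEquiv fun z ↦ (Finite.card_eq.1 (h z)).some, Equiv.ofFiberEquiv_map _⟩

variable [Fintype ι] {c : ι → L} {l : ι → ℕ}

lemma IsStandardLevel.exists_eq (h : IsStandardLevel c l) {k : L} {m : ℕ}
    (hm : m < colourSize c k) : ∃ i, c i = k ∧ l i = m := by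
  have : ({i | c i = k} : Finset ι).image l = range (colourSize c k) := by
    refine eq_of_subset_of_card_le (image_subset_iff.2 fun i hi ↦ ?_) ?_
    · obtain rfl := (mem_filter.1 hi).2
      exact mem_range.2 (h.lt_colourSize i)
    · rw [card_range, card_image_of_injOn, colourSize]
      exact fun i hi j hj ↦
        h.eq_of_eq i j ((mem_filter.1 hi).2.trans (mem_filter.1 hj).2.symm)
  simpa [← this] using mem_range.2 hm

lemma IsStandardLevel.ncard_lt_colourSize (h : IsStandardLevel c l) (γ : L → A) (a : A) (m : ℕ) :
    {k : Set.range c | γ k = a ∧ m < colourSize c k}.ncard =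
      {i | γ (c i) = a ∧ l i = m}.ncard := by
  have : {k : Set.range c | γ k = a ∧ m < colourSize c k} =
      Set.rangeFactorization c '' {i | γ (c i) = a ∧ l i = m} := by
    ext k
    constructor
    · rintro ⟨hk, hm⟩
      obtain ⟨i, hik, hi⟩ := h.exists_eq hm
      exact ⟨i, ⟨hik ▸ hk, hi⟩, Subtype.ext hik⟩
    · rintro ⟨i, ⟨hi, rfl⟩, rfl⟩
      exact ⟨hi, h.lt_colourSize i⟩
  rw [this]
  exact Set.InjOn.ncard_image fun i hi j hj hij ↦
    h.eq_of_eq i j (congrArg Subtype.val hij) (hi.2.trans hj.2.symm)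

lemma IsStandardLevel.ncard_colourSize_eq (h : IsStandardLevel c l) (γ : L → A) (a : A) (m : ℕ) :
    {k : Set.range c | γ k = a ∧ colourSize c k = m + 1}.ncard =
      {i | γ (c i) = a ∧ l i = m}.ncard - {i | γ (c i) = a ∧ l i = m + 1}.ncard := by
  have : {k : Set.range c | γ k = a ∧ colourSize c k = m + 1} =
      {k : Set.range c | γ k = a ∧ m < colourSize c k} \
        {k : Set.range c | γ k = a ∧ m + 1 < colourSize c k} := by
    ext k
    simp only [Set.mem_sdiff, Set.mem_ofPred_eq]
    lia
  rw [this, Set.ncard_sdiff, h.ncard_lt_colourSize, h.ncard_lt_colourSize]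
  exact fun k hk ↦ ⟨hk.1, m.lt_succ_self.trans hk.2⟩

lemma colourSize_range_ne_zero (k : Set.range c) : colourSize c k ≠ 0 := by
  obtain ⟨_, i, rfl⟩ := k
  exact (card_pos.2 ⟨i, by simp⟩).ne'

lemma ncard_colour_eq (c : ι → L) (k : L) : {i | c i = k}.ncard = colourSize c k := by
  rw [Set.ncard_eq_toFinset_card', Set.toFinset_ofPred, colourSize]

variable {L' : Type*} {c' : ι → L'} {γ : L → A} {γ' : L' → A}

lemma IsStandardLevel.exists_equiv_range (h : IsStandardLevel c l) (h' : IsStandardLevel c' l)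
    (hγ : ∀ i, γ (c i) = γ' (c' i)) :
    ∃ e : Set.range c ≃ Set.range c', ∀ k,
      (γ' (e k), colourSize c' (e k)) = (γ k, colourSize c k) := by
  refine exists_equiv_comp_eq (f := fun k : Set.range c ↦ (γ k, colourSize c k))
    (g := fun k : Set.range c' ↦ (γ' k, colourSize c' k)) fun ⟨a, m⟩ ↦ ?_
  simp only [Prod.mk.injEq]
  cases m with
  | zero => simp only [colourSize_range_ne_zero, and_false]; simp
  | succ m => rw [h.ncard_colourSize_eq, h'.ncard_colourSize_eq]; simp only [hγ]

lemma IsStandardLevel.exists_perm (h : IsStandardLevel c l) (h' : IsStandardLevel c' l)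
    (hγ : ∀ i, γ (c i) = γ' (c' i)) :
    ∃ π : Equiv.Perm ι, (∀ i j, c i = c j ↔ c' (π i) = c' (π j)) ∧
      ∀ i, γ (c i) = γ' (c' (π i)) := by
  obtain ⟨e, he⟩ := h.exists_equiv_range h' hγ
  obtain ⟨π, hπ⟩ := exists_equiv_comp_eq (f := e ∘ Set.rangeFactorization c)
    (g := Set.rangeFactorization c') fun z ↦ by
      obtain ⟨k, rfl⟩ := e.surjective z
      simpa [← ncard_colour_eq, Subtype.ext_iff] using (congrArg Prod.snd (he k)).symm
  have colour_π (i : ι) : c' (π i) = e (Set.rangeFactorization c i) := congrArg Subtype.val (hπ i)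
  refine ⟨π, fun i j ↦ ?_, fun i ↦ ?_⟩
  · rw [colour_π, colour_π, Subtype.coe_inj, e.apply_eq_iff_eq, Subtype.ext_iff]
    rfl
  · rw [colour_π]
    exact (congrArg Prod.fst (he (Set.rangeFactorization c i))).symm

end Matching

end Levels

section Triangularity

variable {K ι L L' : Type} [CommGroup K]

lemma Intertwines.multiplicity_eq {G : Type} [Group G] [Fintype G] {P Q : Subgroup G}
    {l : P →* ℂˣ} {m : Q →* ℂˣ} {x : G} (h : Intertwines l m x)
    (conj_mem_iff : ∀ g, x * g * x⁻¹ ∈ P ↔ g ∈ Q) {f : G → ℂ} (hf : IsClassFunction f) :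
    multiplicity P l f = multiplicity Q m f := by
  let e : Q ≃ P := (MulAut.conj x).toEquiv.subtypeEquiv fun g ↦ (conj_mem_iff g).symm
  have coe_e (q : Q) : (e q : G) = x * q * x⁻¹ := rfl
  rw [multiplicity_apply, multiplicity_apply, Nat.card_congr e]
  congr 1
  refine (Fintype.sum_equiv e _ _ fun q ↦ ?_).symm
  rw [coe_e, hf, map_inv, map_inv, h (e q) q (by rw [coe_e, inv_mul_cancel_right])]

lemma multiplicity_colourCharacter_eq [Finite K] [Fintype ι] {c : ι → L} {d : ι → L'}
    {α : L → K →* ℂˣ} {β : L' → K →* ℂˣ} {ρ : Equiv.Perm ι}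
    (colour_iff : ∀ i j, c (ρ i) = c (ρ j) ↔ d i = d j) (hα : ∀ i, α (c (ρ i)) = β (d i))
    {f : Wreath K ι → ℂ} (hf : IsClassFunction f) :
    multiplicity _ (colourCharacter c α 1) f = multiplicity _ (colourCharacter d β 1) f := by
  refine Intertwines.multiplicity_eq (x := SemidirectProduct.inr ρ)
    (intertwines_colourCharacter_one_iff.2 hα) (fun g ↦ ?_) hf
  have colour_conj (i : ι) : c ((ρ * g.right * ρ⁻¹) (ρ i)) = c (ρ i) ↔ d (g.right i) = d i := by
    simpa using colour_iff (g.right i) i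
  exact ρ.surjective.forall.trans (forall_congr' colour_conj)

lemma swap_mem_colourPerms [DecidableEq ι] {c : ι → L} {i j : ι} (h : c i = c j) :
    Equiv.swap i j ∈ colourPerms c := by
  intro k
  obtain rfl | hi := eq_or_ne k i
  · rw [Equiv.swap_apply_left, h]
  obtain rfl | hj := eq_or_ne k j
  · rw [Equiv.swap_apply_right, h]
  · rw [Equiv.swap_apply_of_ne_of_ne hi hj]

/-- The sign of a permutation as a complex linear character. -/
def signCharacter (ι : Type) [DecidableEq ι] [Fintype ι] : Equiv.Perm ι →* ℂˣ :=
  (Units.map (Int.castRingHom ℂ).toMonoidHom).comp Equiv.Perm.sign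

lemma signCharacter_swap_ne_one [DecidableEq ι] [Fintype ι] {i j : ι} (h : i ≠ j) :
    signCharacter ι (Equiv.swap i j) ≠ 1 := by
  intro h_one
  have := congrArg Units.val h_one
  simp [signCharacter, Equiv.Perm.sign_swap h] at this
  norm_num at this

variable [Fintype ι] [LinearOrder ι]

/-- The colouring conjugate to `(c, α)`: the colours are pairs of a linear character and a level,
and a pair `(θ, m)` is given to the elements of level `m` whose colour has character `θ`. As for
conjugate partitions, rows of the diagram of `(c, α)` become columns. -/
def conjugateColouring (c : ι → L) (α : L → K →* ℂˣ) (i : ι) : (K →* ℂˣ) × ℕ :=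
  (α (c i), level c i)

/-- The linear character of the stabiliser of the conjugate colouring twisted by the sign. -/
abbrev conjugateCharacter (c : ι → L) (α : L → K →* ℂˣ) :
    colourStabilizer K (conjugateColouring c α) →* ℂˣ :=
  colourCharacter (conjugateColouring c α) Prod.fst (signCharacter ι)

variable {c : ι → L} {d : ι → L'} {α : L → K →* ℂˣ} {β : L' → K →* ℂˣ} {x : Wreath K ι}

lemma Intertwines.eq_of_level_eq
    (h : Intertwines (colourCharacter c α 1) (conjugateCharacter d β) x) (i j : ι)
    (hc : c (x.right i) = c (x.right j)) (hl : level d i = level d j) : i = j := by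
  obtain ⟨hα, hs⟩ := intertwines_colourCharacter_iff.1 h
  by_contra hij
  have colour_eq : conjugateColouring d β i = conjugateColouring d β j := by
    refine Prod.ext ?_ hl
    rw [← hα, ← hα, hc]
  refine signCharacter_swap_ne_one hij (hs _ (swap_mem_colourPerms colour_eq) ?_).symm
  rw [← Equiv.swap_apply_apply]
  exact swap_mem_colourPerms hc

lemma Intertwines.multiplicity_eq_of_sum_level_eq [Finite K]
    (h : Intertwines (colourCharacter c α 1) (conjugateCharacter d β) x)
    (hsum : ∑ i, level c i = ∑ i, level d i) {f : Wreath K ι → ℂ} (hf : IsClassFunction f) :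
    multiplicity _ (colourCharacter c α 1) f = multiplicity _ (colourCharacter d β 1) f := by
  obtain ⟨π, colour_iff, character_eq⟩ :=
    (isStandardLevel_of_sum_level_eq h.eq_of_level_eq hsum).exists_perm (isStandardLevel_level d)
      (γ := α) (γ' := β) h.colour_eq
  refine multiplicity_colourCharacter_eq (ρ := x.right * π⁻¹)
    (fun i j ↦ ?_) (fun i ↦ ?_) hf
  · simpa using colour_iff (π⁻¹ i) (π⁻¹ j)
  · simpa using character_eq (π⁻¹ i)

lemma sum_multiplicity_conjugateCharacter_eq_zero_or [Finite K] (c : ι → L) (d : ι → L')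
    (α : L → K →* ℂˣ) (β : L' → K →* ℂˣ) :
    (∑ ψ : Irr (Wreath K ι), multiplicity _ (colourCharacter c α 1) ψ.1 *
        multiplicity _ (conjugateCharacter d β) ψ.1 = 0) ∨
      ∑ i, level c i < ∑ i, level d i ∨ ∀ ψ : Irr (Wreath K ι),
        multiplicity _ (colourCharacter c α 1) ψ.1 =
          multiplicity _ (colourCharacter d β 1) ψ.1 := by
  by_cases h : ∀ x, ¬ Intertwines (colourCharacter c α 1) (conjugateCharacter d β) x
  · left
    rw [sum_multiplicity_mul_eq_ncard, ncard_intertwiningDoubleCosets_eq_zero h, Nat.cast_zero]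
  · right
    push Not at h
    obtain ⟨x, hx⟩ := h
    exact (sum_level_le hx.eq_of_level_eq).lt_or_eq.imp_right fun hsum ψ ↦
      hx.multiplicity_eq_of_sum_level_eq hsum (isClassFunction_of_mem_irr ψ.2)

lemma intertwines_conjugateCharacter_one (c : ι → L) (α : L → K →* ℂˣ) :
    Intertwines (colourCharacter c α 1) (conjugateCharacter c α) 1 := by
  refine intertwines_colourCharacter_iff.2 ⟨fun i ↦ rfl, fun v hv hcv ↦ ?_⟩
  have : v = 1 := by
    ext1 i
    refine (isStandardLevel_level c).eq_of_eq _ _ ?_ (congrArg Prod.snd (hv i))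
    simpa using hcv i
  rw [this, map_one, map_one]

lemma Intertwines.mk_eq_mk_one
    (h : Intertwines (colourCharacter c α 1) (conjugateCharacter c α) x) :
    DoubleCoset.mk (colourStabilizer K c) (colourStabilizer K (conjugateColouring c α)) x =
      DoubleCoset.mk _ _ 1 := by
  have standard := isStandardLevel_of_sum_level_eq h.eq_of_level_eq rfl
  have exists_v (i : ι) : ∃ j, c j = c (x.right i) ∧ level c j = level c i := by
    refine (isStandardLevel_level c).exists_eq ?_
    simpa only [Function.comp_apply, colourSize_comp_perm] using standard.lt_colourSize i
  choose v colour_v level_v using exists_v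
  have v_injective : v.Injective := fun i j hij ↦ h.eq_of_level_eq i j
    (by rw [← colour_v, ← colour_v, hij]) (by rw [← level_v, ← level_v j, hij])
  let V : Equiv.Perm ι := Equiv.ofBijective v v_injective.bijective_of_finite
  have V_apply (i : ι) : V i = v i := rfl
  refine (mk_colourStabilizer_eq_iff.2 ⟨x.right * V⁻¹, fun i ↦ ?_, V, fun i ↦ ?_, ?_⟩).symm
  · obtain ⟨j, rfl⟩ := V.surjective i
    rw [Equiv.Perm.mul_apply, Equiv.Perm.inv_def, V.symm_apply_apply, V_apply, colour_v]
  · rw [conjugateColouring, V_apply, colour_v, level_v, h.colour_eq]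
    rfl
  · simp

lemma sum_multiplicity_conjugateCharacter_self [Finite K] (c : ι → L) (α : L → K →* ℂˣ) :
    ∑ ψ : Irr (Wreath K ι), multiplicity _ (colourCharacter c α 1) ψ.1 *
      multiplicity _ (conjugateCharacter c α) ψ.1 = 1 := by
  rw [sum_multiplicity_mul_eq_ncard, ncard_intertwiningDoubleCosets_eq_one
    (intertwines_conjugateCharacter_one c α) fun _ h ↦ h.mk_eq_mk_one, Nat.cast_one]

end Triangularity

section Cycles

open Equiv.Perm

variable {ι : Type} {σ τ : Equiv.Perm ι}

lemma isCycleOn_setOf_sameCycle (σ : Equiv.Perm ι) (i : ι) : σ.IsCycleOn {j | SameCycle σ i j} :=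
  ⟨σ.bijOn fun _ ↦ sameCycle_apply_right, fun _ hj _ hk ↦ hj.symm.trans hk⟩

lemma pow_apply_eq_pow_apply_iff [Finite ι] (h : ∀ i j, SameCycle σ i j ↔ SameCycle τ i j) (i : ι)
    (m k : ℕ) : (σ ^ m) i = (σ ^ k) i ↔ (τ ^ m) i = (τ ^ k) i := by
  have hσ := isCycleOn_setOf_sameCycle σ i
  have hτ := isCycleOn_setOf_sameCycle τ i
  have finite := Set.toFinite {j | SameCycle τ i j}
  simp only [h] at hσ
  rw [← finite.coe_toFinset] at hσ hτ
  have hi : i ∈ finite.toFinset := finite.mem_toFinset.2 (SameCycle.refl τ i)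
  rw [hσ.pow_apply_eq_pow_apply hi, hτ.pow_apply_eq_pow_apply hi]

lemma apply_eq_of_sameCycle {L : Type} {c : ι → L} (hσ : σ ∈ colourPerms c)
    {i j : ι} (h : SameCycle σ i j) : c i = c j := by
  obtain ⟨k, rfl⟩ := h
  exact (zpow_mem hσ k i).symm

/-- The colouring of the points by the cycles of `σ`, a cycle being named by one of its points. -/
def cycleColour (σ : Equiv.Perm ι) (i : ι) : ι :=
  (Quotient.mk (SameCycle.setoid σ) i).out

lemma sameCycle_cycleColour (σ : Equiv.Perm ι) (i : ι) : SameCycle σ (cycleColour σ i) i :=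
  Quotient.mk_out (s := SameCycle.setoid σ) i

lemma cycleColour_eq_iff {i j : ι} :
    cycleColour σ i = cycleColour σ j ↔ SameCycle σ i j :=
  Quotient.out_inj.trans Quotient.eq

lemma mem_colourPerms_cycleColour : σ ∈ colourPerms (cycleColour σ) := fun _ ↦
  cycleColour_eq_iff.2 (sameCycle_apply_left.2 (SameCycle.refl σ _))

lemma setoid_le_of_mem_colourPerms (hτ : τ ∈ colourPerms (cycleColour σ)) :
    SameCycle.setoid τ ≤ SameCycle.setoid σ := fun _ _ h ↦
  cycleColour_eq_iff.1 (apply_eq_of_sameCycle hτ h)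

lemma exists_conj_eq_of_sameCycle_iff [Finite ι] (h : ∀ i j, SameCycle σ i j ↔ SameCycle τ i j) :
    ∃ π, π * τ * π⁻¹ = σ ∧ ∀ i, SameCycle τ (π i) i := by
  have exists_pow (i : ι) : ∃ m : ℕ, (τ ^ m) (cycleColour τ i) = i := by
    obtain ⟨m, -, hm⟩ := (sameCycle_cycleColour τ i).exists_pow_eq'
    exact ⟨m, hm⟩
  choose m hm using exists_pow
  let π₀ (i : ι) : ι := (σ ^ m i) (cycleColour τ i)
  have sameCycle_π₀ (i : ι) : SameCycle τ (π₀ i) i :=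
    (h _ _).1 ((sameCycle_pow_left.2 (SameCycle.refl _ _)).trans
      ((h _ _).2 (sameCycle_cycleColour τ i)))
  have injective_π₀ : π₀.Injective := fun i j hij ↦ by
    have colour_eq : cycleColour τ i = cycleColour τ j :=
      cycleColour_eq_iff.2 (((sameCycle_π₀ i).symm.trans (hij ▸ .refl τ _)).trans (sameCycle_π₀ j))
    have pow_eq : (τ ^ m i) (cycleColour τ i) = (τ ^ m j) (cycleColour τ i) := by
      rw [← pow_apply_eq_pow_apply_iff h]
      exact hij.trans (by rw [colour_eq])
    rw [← hm i, pow_eq, colour_eq, hm]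
  refine ⟨Equiv.ofBijective π₀ injective_π₀.bijective_of_finite, ?_, sameCycle_π₀⟩
  rw [mul_inv_eq_iff_eq_mul]
  ext1 i
  have colour_eq : cycleColour τ (τ i) = cycleColour τ i := mem_colourPerms_cycleColour i
  have pow_eq : (τ ^ m (τ i)) (cycleColour τ i) = (τ ^ (m i + 1)) (cycleColour τ i) := by
    rw [← colour_eq, hm, colour_eq, pow_succ', Equiv.Perm.mul_apply, hm]
  rw [← pow_apply_eq_pow_apply_iff h] at pow_eq
  change (σ ^ m (τ i)) (cycleColour τ (τ i)) = σ (π₀ i)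
  rw [colour_eq, pow_eq, pow_succ', Equiv.Perm.mul_apply]

end Cycles

section FourierTransform

open Equiv.Perm

variable {K ι : Type} [CommGroup K] [Fintype ι]

/-- The linear character `t ↦ ∏ i, θ i (t i)` of a power of `K`. -/
def productCharacter (θ : ι → K →* ℂˣ) : (ι → K) →* ℂˣ :=
  ∏ i, (θ i).comp (Pi.evalMonoidHom _ i)

lemma productCharacter_apply (θ : ι → K →* ℂˣ) (t : ι → K) :
    productCharacter θ t = ∏ i, θ i (t i) := by
  simp [productCharacter]

lemma productCharacter_comp_perm (θ : ι → K →* ℂˣ) (t : ι → K) (π : Equiv.Perm ι) :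
    productCharacter (θ ∘ π) t = productCharacter θ (t ∘ π.symm) := by
  rw [productCharacter_apply, productCharacter_apply,
    ← Equiv.prod_comp π fun i ↦ θ i ((t ∘ π.symm) i)]
  simp

/-- The Fourier transform of a function on a wreath product along the cosets of its base group. -/
def baseFourier [Fintype K] (f : Wreath K ι → ℂ) (θ : ι → K →* ℂˣ) (σ : Equiv.Perm ι) : ℂ :=
  ∑ t : ι → K, f ⟨t, σ⟩ * (productCharacter θ t⁻¹ : ℂˣ)

section

variable [Fintype K] {f : Wreath K ι → ℂ}

lemma baseFourier_conj (hf : IsClassFunction f) (θ : ι → K →* ℂˣ) (σ π : Equiv.Perm ι) :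
    baseFourier f θ (π * σ * π⁻¹) = baseFourier f (θ ∘ π) σ := by
  refine (Fintype.sum_equiv (Equiv.arrowCongr π (Equiv.refl K)) _ _ fun t ↦ ?_).symm
  congr 1
  · rw [← hf ⟨t, σ⟩ (SemidirectProduct.inr π)]
    congr 1
    ext i <;> simp [wreath_mul_left_apply]
  · rw [productCharacter_comp_perm]
    rfl

lemma baseFourier_mul_eq (hf : IsClassFunction f) (θ : ι → K →* ℂˣ) (σ : Equiv.Perm ι)
    (s : ι → K) :
    baseFourier f θ σ * (productCharacter (θ ∘ σ) s : ℂˣ) =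
      baseFourier f θ σ * (productCharacter θ s : ℂˣ) := by
  simp only [baseFourier, Finset.sum_mul]
  refine Fintype.sum_equiv (Equiv.mulRight (s * (s ∘ σ.symm)⁻¹)) _ _ fun t ↦ ?_
  have conj : f ⟨t * (s * (s ∘ σ.symm)⁻¹), σ⟩ = f ⟨t, σ⟩ := by
    rw [← hf ⟨t, σ⟩ (SemidirectProduct.inl s)]
    congr 1
    ext i
    · simp [wreath_mul_left_apply, mul_left_comm, mul_assoc]
    · simp
  rw [Equiv.coe_mulRight, conj, productCharacter_comp_perm, mul_assoc, mul_assoc,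
    ← Units.val_mul, ← Units.val_mul, ← map_mul, ← map_mul]
  congr 3
  rw [mul_inv, mul_inv, inv_inv, mul_assoc, mul_assoc, mul_comm (s ∘ _), inv_mul_cancel_left]

lemma mem_colourPerms_of_baseFourier_ne_zero (hf : IsClassFunction f) {θ : ι → K →* ℂˣ}
    {σ : Equiv.Perm ι} (h : baseFourier f θ σ ≠ 0) : σ ∈ colourPerms θ := by
  intro j
  ext1 a
  have := Units.ext (mul_left_cancel₀ h (baseFourier_mul_eq hf θ σ (Pi.mulSingle j a)))
  simpa [productCharacter_apply, Pi.mulSingle_apply, apply_ite] using this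

lemma multiplicity_colourCharacter_eq_sum_baseFourier {L : Type} (f : Wreath K ι → ℂ) (c : ι → L)
    (α : L → K →* ℂˣ) :
    multiplicity _ (colourCharacter c α 1) f = (Nat.card (colourStabilizer K c) : ℂ)⁻¹ *
      ∑ σ : colourPerms c, baseFourier f (α ∘ c) σ := by
  let e : colourStabilizer K c ≃ colourPerms c × (ι → K) :=
    { toFun := fun x ↦ (⟨x.1.right, x.2⟩, x.1.left)
      invFun := fun y ↦ ⟨⟨y.2, y.1.1⟩, y.1.2⟩ }
  rw [multiplicity_apply]
  congr 1
  simp only [baseFourier]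
  rw [← Fintype.sum_prod_type']
  refine Fintype.sum_equiv e _ _ fun x ↦ ?_
  rw [map_inv, map_inv, colourCharacter_apply, productCharacter_apply, MonoidHom.one_apply, mul_one]
  rfl

lemma baseFourier_eq_of_setoid_eq (hf : IsClassFunction f) {θ : ι → K →* ℂˣ}
    {σ τ : Equiv.Perm ι} (hσ : σ ∈ colourPerms θ)
    (h : SameCycle.setoid τ = SameCycle.setoid σ) : baseFourier f θ τ = baseFourier f θ σ := by
  obtain ⟨π, rfl, hπ⟩ := exists_conj_eq_of_sameCycle_iff (Setoid.ext_iff.1 h)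
  rw [baseFourier_conj hf, show θ ∘ π = θ from funext fun i ↦ apply_eq_of_sameCycle hσ (hπ i)]

lemma baseFourier_eq_zero (hf : IsClassFunction f)
    (h : ∀ (c : ι → ι) (α : ι → K →* ℂˣ), multiplicity _ (colourCharacter c α 1) f = 0)
    (θ : ι → K →* ℂˣ) (σ : Equiv.Perm ι) : baseFourier f θ σ = 0 := by
  have : Finite (Setoid ι) := .of_injective (fun r ↦ r.r) fun r r' h ↦
    Setoid.ext fun i j ↦ iff_of_eq (congrFun₂ (f := r.r) (g := r'.r) h i j)
  induction hs : SameCycle.setoid σ using WellFoundedLT.induction generalizing σ with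
  | ind r ih =>
  subst hs
  by_contra ne_zero
  have hσ : σ ∈ colourPerms θ := mem_colourPerms_of_baseFourier_ne_zero hf ne_zero
  have theta_comp : θ ∘ cycleColour σ = θ :=
    funext fun i ↦ apply_eq_of_sameCycle hσ (sameCycle_cycleColour σ i)
  have sum_eq_zero : ∑ τ : colourPerms (cycleColour σ), baseFourier f θ τ = 0 := by
    have mult_eq_zero := h (cycleColour σ) θ
    rw [multiplicity_colourCharacter_eq_sum_baseFourier, theta_comp] at mult_eq_zero
    exact (mul_eq_zero.1 mult_eq_zero).resolve_left
      (inv_ne_zero (Nat.cast_ne_zero.2 Nat.card_pos.ne'))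
  have summand_eq (τ : colourPerms (cycleColour σ)) : baseFourier f θ τ =
      if SameCycle.setoid τ.1 = SameCycle.setoid σ then baseFourier f θ σ else 0 := by
    split_ifs with h_eq
    · exact baseFourier_eq_of_setoid_eq hf hσ h_eq
    · exact ih _ ((setoid_le_of_mem_colourPerms τ.2).lt_of_ne h_eq) τ.1 rfl
  rw [Fintype.sum_congr _ _ summand_eq, ← Finset.sum_filter, Finset.sum_const, smul_eq_zero]
    at sum_eq_zero
  let σ' : colourPerms (cycleColour σ) := ⟨σ, mem_colourPerms_cycleColour⟩
  have card_eq_zero := sum_eq_zero.resolve_right ne_zero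
  exact Finset.filter_eq_empty_iff.1 (Finset.card_eq_zero.1 card_eq_zero) (Finset.mem_univ σ') rfl

lemma eq_zero_of_baseFourier_eq_zero (h : ∀ θ σ, baseFourier f θ σ = 0) : f = 0 := by
  ext ⟨s, σ⟩
  have inversion : ∑ θ : ι → K →* ℂˣ, baseFourier f θ σ * (productCharacter θ s : ℂˣ) =
      f ⟨s, σ⟩ * Nat.card (ι → K) := by
    simp only [baseFourier, Finset.sum_mul]
    rw [Finset.sum_comm]
    simp only [mul_assoc, ← Units.val_mul, ← map_mul, ← Finset.mul_sum]
    simp only [productCharacter_apply, Units.coe_prod, sum_prod_dual_apply]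
    rw [Fintype.sum_eq_single s fun t ht ↦ ?_]
    · simp
    · rw [if_neg (by rwa [inv_mul_eq_one]), mul_zero]
  simp only [h, zero_mul, Finset.sum_const_zero] at inversion
  exact (mul_eq_zero.1 inversion.symm).resolve_right (Nat.cast_ne_zero.2 Nat.card_pos.ne')

end

theorem eq_zero_of_multiplicity_colourCharacter_eq_zero [Finite K] {f : Wreath K ι → ℂ}
    (hf : IsClassFunction f)
    (h : ∀ (c : ι → ι) (α : ι → K →* ℂˣ), multiplicity _ (colourCharacter c α 1) f = 0) :
    f = 0 := by
  have := Fintype.ofFinite K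
  exact eq_zero_of_baseFourier_eq_zero (baseFourier_eq_zero hf h)

end FourierTransform

section IntegerMatrices

variable {J X Y : Type} [Fintype J] [Fintype Y] [DecidableEq X]

lemma exists_eq_single_of_dotProduct_self_eq_one {v : Y → ℤ} (h : v ⬝ᵥ v = 1) :
    ∃ (y : Y) (ε : ℤˣ), v = Pi.single y (ε : ℤ) := by
  have ne_zero : v ≠ 0 := by
    rintro rfl
    simp at h
  obtain ⟨y, hy⟩ := Function.ne_iff.1 ne_zero
  have sum_split := Finset.add_sum_erase Finset.univ (fun y ↦ v y * v y) (Finset.mem_univ y)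
  have rest_nonneg : 0 ≤ ∑ y' ∈ Finset.univ.erase y, v y' * v y' :=
    Finset.sum_nonneg fun _ _ ↦ mul_self_nonneg _
  have pos : 0 < v y * v y := mul_self_pos.2 hy
  have total : v y * v y + ∑ y' ∈ Finset.univ.erase y, v y' * v y' = 1 := sum_split.trans h
  have mul_self_eq_one : v y * v y = 1 := by omega
  have rest_eq_zero : ∑ y' ∈ Finset.univ.erase y, v y' * v y' = 0 := by omega
  refine ⟨y, Units.mkOfMulEqOne _ _ mul_self_eq_one, funext fun y' ↦ ?_⟩
  rcases eq_or_ne y' y with rfl | hne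
  · simp
  · rw [Pi.single_eq_of_ne hne]
    exact mul_self_eq_zero.1 ((Finset.sum_eq_zero_iff_of_nonneg fun _ _ ↦ mul_self_nonneg _).1
      rest_eq_zero y' (Finset.mem_erase.2 ⟨hne, Finset.mem_univ _⟩))

lemma exists_embedding_eq_single {V : Matrix X Y ℤ} (h : V * Vᵀ = 1) :
    ∃ (Φ : X ↪ Y) (ε : X → ℤˣ), ∀ x, V x = Pi.single (Φ x) (ε x : ℤ) := by
  have dotProduct_eq (x x' : X) : V x ⬝ᵥ V x' = (1 : Matrix X X ℤ) x x' := by rw [← h]; rfl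
  choose Φ ε hV using fun x ↦
    exists_eq_single_of_dotProduct_self_eq_one ((dotProduct_eq x x).trans (one_apply_eq x))
  refine ⟨⟨Φ, fun x x' hΦ ↦ ?_⟩, ε, hV⟩
  by_contra hne
  have := dotProduct_eq x x'
  simp [hV, hΦ, one_apply_ne hne] at this

variable [Fintype X]

lemma det_eq_one_of_unitriangular [DecidableEq J] {R : Type} [CommRing R]
    (N : Matrix J J R) (Ψ : J → ℕ)
    (diagonal : ∀ j, N j j = 1) (triangular : ∀ i j, N i j = 0 ∨ Ψ i < Ψ j ∨ i = j) :
    N.det = 1 := by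
  have blockTriangular : N.BlockTriangular Ψ := fun i j hij ↦
    (triangular i j).resolve_right (by rintro (h | rfl) <;> order)
  rw [blockTriangular.det]
  refine Finset.prod_eq_one fun k _ ↦ ?_
  have block_eq_one : N.toSquareBlock Ψ k = 1 := by
    ext ⟨i, hi⟩ ⟨j, hj⟩
    rcases eq_or_ne i j with rfl | hij
    · simp [toSquareBlock_def, diagonal]
    · have := (triangular i j).resolve_right (by simp [hi, hj, hij])
      simp [toSquareBlock_def, this, hij]
  rw [block_eq_one, det_one]

lemma mul_eq_one_of_injective_mulVec [DecidableEq J] {R : Type} [Ring R]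
    {A : Matrix J X R} {U : Matrix X J R}
    (injective : A.mulVec.Injective) (h : A * U = 1) : U * A = 1 := by
  refine ext_of_mulVec_single fun x ↦ injective ?_
  rw [mulVec_mulVec, ← Matrix.mul_assoc, h, Matrix.one_mul, one_mulVec]

lemma exists_mul_eq_one_of_unitriangular {R : Type} [CommRing R] (A E : Matrix J X R) (Ψ : J → ℕ)
    (injective : A.mulVec.Injective) (diagonal : ∀ j, (A * Eᵀ) j j = 1)
    (triangular : ∀ i j, (A * Eᵀ) i j = 0 ∨ Ψ i < Ψ j ∨ A i = A j) :
    ∃ U : Matrix X J R, U * A = 1 := by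
  let s : Set.range A.row → J := fun r ↦ r.2.choose
  have apply_s (r : Set.range A.row) : A (s r) = r.1 := r.2.choose_spec
  have := Fintype.ofFinite (Set.range A.row)
  set A' := A.submatrix s id with hA'
  set N := A' * (E.submatrix s id)ᵀ with hN
  have isUnit_det : IsUnit N.det := by
    rw [det_eq_one_of_unitriangular N (Ψ ∘ s) (fun _ ↦ diagonal _) fun r r' ↦ ?_]
    · exact isUnit_one
    · refine (triangular (s r) (s r')).imp_right (Or.imp_right fun h ↦ ?_)
      rwa [apply_s, apply_s, Subtype.val_inj] at h
  have injective' : A'.mulVec.Injective := fun v w h ↦ injective <| funext fun j ↦ by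
    simpa [hA', mulVec, apply_s] using congrFun h ⟨A j, j, rfl⟩
  have left_inverse := mul_eq_one_of_injective_mulVec injective'
    (by rw [← Matrix.mul_assoc, ← hN, mul_nonsing_inv N isUnit_det] :
      A' * ((E.submatrix s id)ᵀ * N⁻¹) = 1)
  refine ⟨(E.submatrix s id)ᵀ * N⁻¹ * (1 : Matrix J J R).submatrix s (Equiv.refl J), ?_⟩
  rw [Matrix.mul_assoc, one_submatrix_mul]
  exact left_inverse

lemma exists_factor_of_gram_eq {A : Matrix J X ℤ} {B : Matrix J Y ℤ} {U : Matrix X J ℤ}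
    (left_inverse : U * A = 1) (gram : A * Aᵀ = B * Bᵀ) :
    ∃ V : Matrix X Y ℤ, V * Vᵀ = 1 ∧ B = A * V := by
  have left_inverse_transpose : Aᵀ * Uᵀ = 1 := by
    rw [← transpose_mul, left_inverse, transpose_one]
  have factor : B * (U * B)ᵀ = A := by
    rw [transpose_mul, ← Matrix.mul_assoc, ← gram, Matrix.mul_assoc, left_inverse_transpose,
      Matrix.mul_one]
  have factor_transpose : U * B * Bᵀ = Aᵀ := by
    rw [← factor, transpose_mul, transpose_transpose]
  have orthonormal : U * B * (U * B)ᵀ = 1 := by rw [Matrix.mul_assoc, factor, left_inverse]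
  refine ⟨U * B, orthonormal, sub_eq_zero.1 ?_⟩
  rw [← self_mul_conjTranspose_eq_zero, conjTranspose_eq_transpose_of_trivial, transpose_sub,
    transpose_mul, Matrix.sub_mul, Matrix.mul_sub, Matrix.mul_sub, ← Matrix.mul_assoc B, factor,
    Matrix.mul_assoc A _ Bᵀ, factor_transpose, Matrix.mul_assoc A, ← Matrix.mul_assoc (U * B),
    orthonormal, Matrix.one_mul, gram]
  simp

theorem exists_embedding_of_gram_eq {A : Matrix J X ℤ} {B : Matrix J Y ℤ} {U : Matrix X J ℤ}
    (left_inverse : U * A = 1) (gram : A * Aᵀ = B * Bᵀ) {w : J → ℤ}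
    (pos : ∀ x, 0 < (w ᵥ* A) x) (nonneg : ∀ y, 0 ≤ (w ᵥ* B) y) :
    ∃ Φ : X ↪ Y, (∀ x, (w ᵥ* B) (Φ x) = (w ᵥ* A) x) ∧
      ∀ y ∉ Set.range Φ, (w ᵥ* B) y = 0 := by
  obtain ⟨V, orthonormal, rfl⟩ := exists_factor_of_gram_eq left_inverse gram
  obtain ⟨Φ, ε, hV⟩ := exists_embedding_eq_single orthonormal
  have vecMul_apply (y : Y) :
      (w ᵥ* (A * V)) y = ∑ x, (w ᵥ* A) x * Pi.single (M := fun _ ↦ ℤ) (Φ x) (ε x : ℤ) y := by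
    simp only [← hV, ← vecMul_vecMul]
    rfl
  have vecMul_apply_Φ (x : X) : (w ᵥ* (A * V)) (Φ x) = (w ᵥ* A) x * ε x := by
    rw [vecMul_apply, Fintype.sum_eq_single x fun x' hx' ↦ ?_, Pi.single_eq_same]
    rw [Pi.single_eq_of_ne (Φ.injective.ne hx'.symm), mul_zero]
  refine ⟨Φ, fun x ↦ ?_, fun y hy ↦ ?_⟩
  · have ε_nonneg : 0 ≤ (ε x : ℤ) :=
      nonneg_of_mul_nonneg_right ((nonneg _).trans_eq (vecMul_apply_Φ x)) (pos x)
    rcases Int.units_eq_one_or (ε x) with hε | hε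
    · rw [vecMul_apply_Φ, hε, Units.val_one, mul_one]
    · simp [hε] at ε_nonneg
  · rw [vecMul_apply]
    refine Finset.sum_eq_zero fun x _ ↦ ?_
    rw [Pi.single_eq_of_ne fun h ↦ hy ⟨x, h.symm⟩, mul_zero]

end IntegerMatrices

section MultiplicityMatrices

variable {G J J' : Type} [Group G] [Fintype G]

/-- The integer matrix with rows indexed by a family of linear characters of subgroups of `G`,
columns indexed by `Irr G`, and the multiplicities as entries. -/
def multiplicityMatrix (P : J → Subgroup G) (l : ∀ j, P j →* ℂˣ) : Matrix J (Irr G) ℤ :=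
  of fun j χ ↦ ((exists_nat_eq_multiplicity (P j) (l j) χ.2).choose : ℤ)

lemma cast_multiplicityMatrix_apply (P : J → Subgroup G) (l : ∀ j, P j →* ℂˣ) (j : J) (χ : Irr G) :
    (multiplicityMatrix P l j χ : ℂ) = multiplicity (P j) (l j) χ.1 := by
  rw [(exists_nat_eq_multiplicity (P j) (l j) χ.2).choose_spec]
  simp [multiplicityMatrix]

lemma multiplicityMatrix_nonneg (P : J → Subgroup G) (l : ∀ j, P j →* ℂˣ) (j : J) (χ : Irr G) :
    0 ≤ multiplicityMatrix P l j χ := by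
  simp [multiplicityMatrix]

lemma cast_multiplicityMatrix_mul_transpose_apply (P : J → Subgroup G) (l : ∀ j, P j →* ℂˣ)
    (Q : J' → Subgroup G) (m : ∀ j, Q j →* ℂˣ) (i : J) (j : J') :
    ((multiplicityMatrix P l * (multiplicityMatrix Q m)ᵀ) i j : ℂ) =
      ∑ χ : Irr G, multiplicity (P i) (l i) χ.1 * multiplicity (Q j) (m j) χ.1 := by
  simp [mul_apply, cast_multiplicityMatrix_apply]

end MultiplicityMatrices

section ColourMatrices

variable (K ι : Type) [CommGroup K] [Finite K] [Fintype ι]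

/-- The multiplicities of the linear characters `colourCharacter c α 1`. -/
def colourMatrix : Matrix ((ι → ι) × (ι → K →* ℂˣ)) (Irr (Wreath K ι)) ℤ :=
  multiplicityMatrix (fun j ↦ colourStabilizer K j.1) fun j ↦ colourCharacter j.1 j.2 1

lemma injective_mulVec_colourMatrix : (colourMatrix K ι).mulVec.Injective := by
  intro v w h
  have isClassFunction : IsClassFunction (∑ ψ : Irr (Wreath K ι), ((v - w) ψ : ℂ) • ψ.1) := by
    intro g x
    simp only [Finset.sum_apply, Pi.smul_apply, isClassFunction_of_mem_irr (Subtype.prop _) g x]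
  have eq_zero := eq_zero_of_multiplicity_colourCharacter_eq_zero isClassFunction fun c α ↦ by
    have apply_eq_zero : (colourMatrix K ι *ᵥ (v - w)) (c, α) = 0 := by
      rw [mulVec_sub, sub_eq_zero.2 h, Pi.zero_apply]
    rw [← Int.cast_eq_zero (α := ℂ), mulVec, dotProduct, Int.cast_sum] at apply_eq_zero
    rw [map_sum, ← apply_eq_zero]
    simp [colourMatrix, cast_multiplicityMatrix_apply, mul_comm]
  funext ψ
  simpa [sub_eq_zero] using Fintype.linearIndependent_iff.1 linearIndependent_irr _ eq_zero ψ

variable [LinearOrder ι]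

/-- The multiplicities of the linear characters `conjugateCharacter c α`. -/
def conjugateMatrix : Matrix ((ι → ι) × (ι → K →* ℂˣ)) (Irr (Wreath K ι)) ℤ :=
  multiplicityMatrix _ fun j ↦ conjugateCharacter (K := K) j.1 j.2

lemma exists_mul_colourMatrix_eq_one :
    ∃ U : Matrix (Irr (Wreath K ι)) ((ι → ι) × (ι → K →* ℂˣ)) ℤ, U * colourMatrix K ι = 1 := by
  refine exists_mul_eq_one_of_unitriangular (colourMatrix K ι) (conjugateMatrix K ι)
    (fun j ↦ ∑ i, level j.1 i) (injective_mulVec_colourMatrix K ι) (fun j ↦ ?_) fun i j ↦ ?_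
  · rw [← Int.cast_inj (α := ℂ), colourMatrix, conjugateMatrix,
      cast_multiplicityMatrix_mul_transpose_apply, sum_multiplicity_conjugateCharacter_self,
      Int.cast_one]
  · rw [← Int.cast_eq_zero (α := ℂ), colourMatrix, conjugateMatrix,
      cast_multiplicityMatrix_mul_transpose_apply]
    refine (sum_multiplicity_conjugateCharacter_eq_zero_or i.1 j.1 i.2 j.2).imp_right
      (Or.imp_right fun h ↦ funext fun ψ ↦ ?_)
    rw [← Int.cast_inj (α := ℂ), cast_multiplicityMatrix_apply, cast_multiplicityMatrix_apply, h]

end ColourMatrices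

section Correspondence

/-- The weights that turn a sum over all coloured linear characters into the sum over those with
pairwise distinct colours `c = id`. -/
def idIndicator (ι T : Type) (j : (ι → ι) × T) : ℤ :=
  if j.1 = id then 1 else 0

lemma idIndicator_vecMul {ι T X : Type} [Fintype ι] [Fintype T] [DecidableEq ι]
    (A : Matrix ((ι → ι) × T) X ℤ) (x : X) :
    (idIndicator ι T ᵥ* A) x = ∑ θ, A (id, θ) x := by
  rw [vecMul, dotProduct, Fintype.sum_prod_type, Fintype.sum_eq_single id fun c hc ↦ ?_]
  · simp [idIndicator]
  · simp [idIndicator, hc]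

lemma cast_idIndicator_vecMul_colourMatrix (K ι : Type) [CommGroup K] [Finite K] [Fintype ι]
    [DecidableEq ι] (ψ : Irr (Wreath K ι)) :
    ((idIndicator ι (ι → K →* ℂˣ) ᵥ* colourMatrix K ι) ψ : ℂ) = ψ.1 1 := by
  rw [idIndicator_vecMul, Int.cast_sum, ← sum_multiplicity_colourCharacter_id ψ.1]
  simp only [colourMatrix, cast_multiplicityMatrix_apply]

variable (F : Type) [Field F] [Fintype F]

/-- The multiplicities of the linear characters `parabolicCharacter c α`. -/
def parabolicMatrix (ι : Type) [Fintype ι] [LinearOrder ι] :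
    Matrix ((ι → ι) × (ι → Fˣ →* ℂˣ)) (Irr (GL ι F)) ℤ :=
  multiplicityMatrix (fun j ↦ parabolic F j.1) fun j ↦ parabolicCharacter j.1 j.2

lemma colourMatrix_mul_transpose_eq (ι : Type) [Fintype ι] [LinearOrder ι] :
    colourMatrix Fˣ ι * (colourMatrix Fˣ ι)ᵀ = parabolicMatrix F ι * (parabolicMatrix F ι)ᵀ := by
  ext i j
  rw [← Int.cast_inj (α := ℂ), colourMatrix, parabolicMatrix,
    cast_multiplicityMatrix_mul_transpose_apply, cast_multiplicityMatrix_mul_transpose_apply,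
    sum_multiplicity_parabolicCharacter_eq]

lemma cast_idIndicator_vecMul_parabolicMatrix {n : ℕ} (χ : Irr (GL (Fin n) F)) :
    ((idIndicator (Fin n) (Fin n → Fˣ →* ℂˣ) ᵥ* parabolicMatrix F (Fin n)) χ : ℂ) =
      multiplicity (unitriangular F n) 1 χ.1 := by
  rw [idIndicator_vecMul, Int.cast_sum, ← sum_multiplicity_parabolicCharacter_id χ.1]
  simp only [parabolicMatrix, cast_multiplicityMatrix_apply]

lemma exists_pos_degree_eq {G : Type} [Group G] [Finite G] {χ : G → ℂ} (hχ : χ ∈ Irr G) :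
    ∃ d : ℕ, 0 < d ∧ χ 1 = d := by
  obtain ⟨V, hV, rfl⟩ := hχ
  refine ⟨Module.finrank ℂ V, Nat.pos_of_ne_zero fun finrank_eq_zero ↦ ?_, V.char_one⟩
  have := Fintype.ofFinite G
  have : Subsingleton V := Module.finrank_zero_iff.1 finrank_eq_zero
  have character_eq_zero : V.character = 0 :=
    funext fun g ↦ by simp [FDRep.character, Subsingleton.elim (V.ρ g) 0]
  have pairing_self := pairing_irr ⟨V, hV, rfl⟩ ⟨V, hV, rfl⟩
  simp [character_eq_zero] at pairing_self

theorem exists_embedding_irr (n : ℕ) :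
    ∃ Φ : Irr (Wreath Fˣ (Fin n)) ↪ Irr (GL (Fin n) F),
      (∀ ψ, multiplicity (unitriangular F n) 1 (Φ ψ).1 = ψ.1 1) ∧
        ∀ χ ∉ Set.range Φ, multiplicity (unitriangular F n) 1 χ.1 = 0 := by
  obtain ⟨U, hU⟩ := exists_mul_colourMatrix_eq_one Fˣ (Fin n)
  have pos (ψ : Irr (Wreath Fˣ (Fin n))) :
      0 < (idIndicator _ _ ᵥ* colourMatrix Fˣ (Fin n)) ψ := by
    obtain ⟨d, d_pos, hd⟩ := exists_pos_degree_eq ψ.2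
    rw [← cast_idIndicator_vecMul_colourMatrix] at hd
    exact (Int.natCast_pos.2 d_pos).trans_eq (by exact_mod_cast hd.symm)
  have nonneg (χ : Irr (GL (Fin n) F)) :
      0 ≤ (idIndicator _ _ ᵥ* parabolicMatrix F (Fin n)) χ := by
    rw [idIndicator_vecMul]
    exact Finset.sum_nonneg fun _ _ ↦ multiplicityMatrix_nonneg _ _ _ _
  obtain ⟨Φ, hΦ, hΦ_zero⟩ :=
    exists_embedding_of_gram_eq hU (colourMatrix_mul_transpose_eq F _) pos nonneg
  refine ⟨Φ, fun ψ ↦ ?_, fun χ hχ ↦ ?_⟩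
  · rw [← cast_idIndicator_vecMul_parabolicMatrix, hΦ, cast_idIndicator_vecMul_colourMatrix]
  · rw [← cast_idIndicator_vecMul_parabolicMatrix, hΦ_zero χ hχ, Int.cast_zero]

end Correspondence

section Coprimality

variable {G H : Type} [Group G] [Group H] {p : ℕ}

lemma irrCoprime_subset_irr : IrrCoprime p G ⊆ Irr G :=
  fun _ ⟨V, hV, hχ, _⟩ ↦ ⟨V, hV, hχ⟩

lemma mem_irrCoprime_iff {χ : G → ℂ} (hχ : χ ∈ Irr G) {d : ℕ} (hd : χ 1 = d) :
    χ ∈ IrrCoprime p G ↔ d.Coprime p := by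
  have finrank_eq {V : FDRep ℂ G} (hV : V.character = χ) : Module.finrank ℂ V = d := by
    rw [← hV, FDRep.char_one] at hd
    exact_mod_cast hd
  constructor
  · rintro ⟨V, -, hV, coprime⟩
    rwa [← finrank_eq hV]
  · obtain ⟨V, simple, hV⟩ := hχ
    exact fun coprime ↦ ⟨V, simple, hV, by rwa [finrank_eq hV]⟩

lemma comp_mem_irrCoprime [Finite G] (e : G ≃* H) {χ : H → ℂ} (h : χ ∈ IrrCoprime p H) :
    χ ∘ e ∈ IrrCoprime p G := by
  obtain ⟨V, hV, rfl, coprime⟩ := h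
  have := Fintype.ofFinite G
  have := Fintype.ofEquiv G e.toEquiv
  refine ⟨FDRep.of (V.ρ.comp e.toMonoidHom), ?_, rfl, coprime⟩
  rw [FDRep.simple_iff_char_is_norm_one] at hV ⊢
  rw [Nat.card_congr e.toEquiv, ← hV]
  refine Fintype.sum_equiv e.toEquiv _ _ fun g ↦ ?_
  have map_inv : e.toEquiv g⁻¹ = (e.toEquiv g)⁻¹ := map_inv e g
  rw [← map_inv]
  rfl

lemma nonempty_irrCoprime_equiv [Finite G] (p : ℕ) (e : G ≃* H) :
    Nonempty (IrrCoprime p H ≃ IrrCoprime p G) := by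
  have := Finite.of_equiv G e.toEquiv
  refine ⟨(Equiv.arrowCongr e.symm.toEquiv (Equiv.refl ℂ)).subtypeEquiv fun χ ↦
    ⟨comp_mem_irrCoprime e, fun h ↦ ?_⟩⟩
  convert comp_mem_irrCoprime e.symm h
  ext
  simp

variable {F : Type} [Field F] [Fintype F] {n : ℕ}

lemma mem_irrCoprime_iff_of_multiplicity_unitriangular_eq (hp : p ∣ Nat.card Fˣ)
    {χ : GL (Fin n) F → ℂ} (hχ : χ ∈ Irr (GL (Fin n) F)) {r : ℕ}
    (hr : multiplicity (unitriangular F n) 1 χ = r) :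
    χ ∈ IrrCoprime p (GL (Fin n) F) ↔ r.Coprime p := by
  obtain ⟨d, -, hd⟩ := exists_pos_degree_eq hχ
  obtain ⟨z, hz⟩ := exists_int_degree_sub_multiplicity_unitriangular_eq hχ
  rw [hd, hr] at hz
  have sub_eq : (d : ℤ) - r = Nat.card Fˣ * z := by exact_mod_cast hz
  have modEq : r ≡ d [MOD p] := (Nat.modEq_iff_dvd.2
    (sub_eq ▸ (Int.natCast_dvd_natCast.2 hp).mul_right z))
  rw [mem_irrCoprime_iff hχ hd, Nat.Coprime, Nat.Coprime, modEq.gcd_eq]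

theorem nonempty_irrCoprime_GL_equiv_irrCoprime_wreath (F : Type) [Field F] [Finite F] (n : ℕ)
    (hp : p ≠ 1) (hpF : p ∣ Nat.card Fˣ) :
    Nonempty (IrrCoprime p (GL (Fin n) F) ≃ IrrCoprime p (Wreath Fˣ (Fin n))) := by
  have := Fintype.ofFinite F
  obtain ⟨Φ, multiplicity_Φ, multiplicity_eq_zero⟩ := exists_embedding_irr F n
  have mem_iff (ψ : Irr (Wreath Fˣ (Fin n))) :
      ψ.1 ∈ IrrCoprime p (Wreath Fˣ (Fin n)) ↔ (Φ ψ).1 ∈ IrrCoprime p (GL (Fin n) F) := by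
    obtain ⟨d, -, hd⟩ := exists_pos_degree_eq ψ.2
    rw [mem_irrCoprime_iff ψ.2 hd, mem_irrCoprime_iff_of_multiplicity_unitriangular_eq hpF
      (Φ ψ).2 ((multiplicity_Φ ψ).trans hd)]
  have mem_range {χ : Irr (GL (Fin n) F)} (hχ : χ.1 ∈ IrrCoprime p (GL (Fin n) F)) :
      χ ∈ Set.range Φ := by
    by_contra not_mem
    have coprime := (mem_irrCoprime_iff_of_multiplicity_unitriangular_eq hpF χ.2
      ((multiplicity_eq_zero χ not_mem).trans Nat.cast_zero.symm)).1 hχ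
    exact hp ((Nat.coprime_zero_left p).1 coprime)
  let Φ' : {ψ : Irr (Wreath Fˣ (Fin n)) // ψ.1 ∈ IrrCoprime p (Wreath Fˣ (Fin n))} →
      {χ : Irr (GL (Fin n) F) // χ.1 ∈ IrrCoprime p (GL (Fin n) F)} :=
    Subtype.map Φ fun ψ ↦ (mem_iff ψ).1
  have bijective : Φ'.Bijective := by
    refine ⟨Subtype.map_injective _ Φ.injective, fun ⟨χ, hχ⟩ ↦ ?_⟩
    obtain ⟨ψ, rfl⟩ := mem_range hχ
    exact ⟨⟨ψ, (mem_iff ψ).2 hχ⟩, rfl⟩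
  exact ⟨(Equiv.subtypeSubtypeEquivSubtype fun h ↦ irrCoprime_subset_irr h).symm.trans
    ((Equiv.ofBijective Φ' bijective).symm.trans
      (Equiv.subtypeSubtypeEquivSubtype fun h ↦ irrCoprime_subset_irr h))⟩

end Coprimality

section MonomialGroup

variable {F ι : Type} [Field F] [Fintype ι] [DecidableEq ι]

lemma monomialHom_apply_ne_zero_iff (x : Wreath Fˣ ι) (i j : ι) :
    (monomialHom x).1 i j ≠ 0 ↔ i = x.right j := by
  simp [monomialHom_apply]

lemma mem_range_monomialHom_iff {g : GL ι F} :
    g ∈ (monomialHom (F := F) (ι := ι)).range ↔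
      (∀ i, ∃! j, g.1 i j ≠ 0) ∧ ∀ j, ∃! i, g.1 i j ≠ 0 := by
  constructor
  · rintro ⟨x, rfl⟩
    simp only [monomialHom_apply_ne_zero_iff]
    exact ⟨fun i ↦ ⟨x.right.symm i, by simp, by simp +contextual⟩, fun j ↦ by simp⟩
  · rintro ⟨row, col⟩
    refine exists_monomialHom_eq fun j ↦ ?_
    obtain ⟨i, ne_zero, col_unique⟩ := col j
    exact ⟨i, ne_zero, fun i' hi' ↦ of_not_not (mt (col_unique i') hi'),
      fun j' hj' ↦ of_not_not (mt (fun h ↦ (row i).unique h ne_zero) hj')⟩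

end MonomialGroup

end MonomialCorrespondence

open MonomialCorrespondence in
theorem global_bijection_GL_monomial_general (n p : ℕ) (hp : p ≠ 1) (F : Type) [Field F] [Finite F]
    (hpF : p ∣ Nat.card Fˣ) (M : Subgroup (GL (Fin n) F))
    (hM : ∀ A : GL (Fin n) F, A ∈ M ↔
      (∀ i : Fin n, ∃! j : Fin n, (A : Matrix (Fin n) (Fin n) F) i j ≠ 0) ∧
      (∀ j : Fin n, ∃! i : Fin n, (A : Matrix (Fin n) (Fin n) F) i j ≠ 0)) :
    Nonempty (IrrCoprime p (GL (Fin n) F) ≃ IrrCoprime p M) := by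
  obtain rfl : M = monomialHom.range :=
    Subgroup.ext fun A ↦ (hM A).trans mem_range_monomialHom_iff.symm
  obtain ⟨e⟩ := nonempty_irrCoprime_GL_equiv_irrCoprime_wreath F n hp hpF
  obtain ⟨f⟩ := nonempty_irrCoprime_equiv p
    (MonoidHom.ofInjective (monomialHom_injective (F := F) (ι := Fin n))).symm
  exact ⟨e.trans f⟩

/-- Let `F` be a finite field with `q` elements where `3 ∣ q - 1`, let `n ≥ 1`, and let
`M ≤ GL_n(F)` be the subgroup of monomial matrices (matrices with exactly one nonzero entry
in each row and each column), so `M ≅ GL_1(F) ≀ S_n`.  Then there is a bijection between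
`Irr_{3'}(GL_n(F))` and `Irr_{3'}(M)`. -/
theorem global_bijection_GL_monomial (n q : ℕ) (hn : 0 < n) (F : Type) [Field F] [Fintype F]
    (hF : Fintype.card F = q) (h3 : 3 ∣ q - 1)
    (M : Subgroup (GL (Fin n) F))
    (hM : ∀ A : GL (Fin n) F, A ∈ M ↔
      (∀ i : Fin n, ∃! j : Fin n, (A : Matrix (Fin n) (Fin n) F) i j ≠ 0) ∧
      (∀ j : Fin n, ∃! i : Fin n, (A : Matrix (Fin n) (Fin n) F) i j ≠ 0)) :
    Nonempty ((IrrCoprime 3 (GL (Fin n) F)) ≃ (IrrCoprime 3 ↥M)) := by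
  exact global_bijection_GL_monomial_general n 3 (by norm_num) F
    (by rwa [Nat.card_units, Nat.card_eq_fintype_card, hF]) M hM
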